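/- Let p be a prime, e ≥ 1, q = p^e, and let Ω = AlgebraicClosure (ZMod p). Fix positive integers d_1, …, d_n. Let f_1, …, f_r ∈ MvPolynomial (Fin n) Ω be polynomials all of whose coefficients c satisfy c^q = c. For m ≥ 1 set N_m = Nat.card {x : Fin n → Ω | (∀ j, f_j evaluated at x is 0) ∧ (∀ i, (x i)^{q^{m·d_i}} = x i)}, the number of solutions whose i-th coordinate lies in the subfield with q^{m·d_i} elements (the fixed points of the Frobenius vector (Fr_q^{d_1}, …, Fr_q^{d_n}) iterated m times). Then the formal power series Σ_{m≥1} N_m t^m ∈ ℚ[[t]] is rational. -/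

import Mathlib

open PowerSeries

/-!
Additive characters of the finite subfields turn the number `N_m` of zeros, multiplied by a power
`p ^ (c * m)`, into an exponential sum. With Dwork's splitting function and Teichmüller
representatives, this sum is computed modulo any power of a divisor `ϖ` of `p` by evaluating a
product of Frobenius twists of one polynomial `G` at roots of unity. The Frobenius vector acts on
coordinates of different periods `d i`; splitting the coordinate `i` into a cycle of `d i`
coordinates turns it into a permutation `S`, and Dwork's trace formula writes the sum as a
combination of traces `tr (S * A ^ m)`, where `A` is the matrix of `ψ_q ∘ G`, whose rows are
divisible by growing powers of `ϖ`. Hence the Hankel determinants of the integers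
`a_m = p ^ (c * m) * N_m` are divisible by `ϖ ^ (E * N ^ 2)` for every `E`, as soon as their size
`N` is large. As `|a_m|` grows at most exponentially, these determinants vanish, and by Kronecker's
criterion the series is rational.
-/

namespace FrobeniusVector

open scoped Polynomial

section Rationality

variable {K : Type*} [Field K]

/-- Rationality of a formal power series over a field: it is a quotient of two polynomials. -/
def IsRational (F : K⟦X⟧) : Prop :=
  ∃ a b : K[X], b ≠ 0 ∧ (b : K⟦X⟧) * F = (a : K⟦X⟧)

theorem IsRational.X_mul {F : K⟦X⟧} (hF : IsRational F) : IsRational (X * F) := by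
  obtain ⟨a, b, hb, h⟩ := hF
  refine ⟨Polynomial.X * a, b, hb, ?_⟩
  rw [Polynomial.coe_mul, Polynomial.coe_X, ← h]
  ring

theorem IsRational.rescale {F : K⟦X⟧} (hF : IsRational F) {c : K} (hc : c ≠ 0) :
    IsRational (PowerSeries.rescale c F) := by
  obtain ⟨a, b, hb, h⟩ := hF
  refine ⟨a.comp (Polynomial.C c * Polynomial.X), b.comp (Polynomial.C c * Polynomial.X),
    fun h => hb ((Polynomial.comp_C_mul_X_eq_zero_iff (mem_nonZeroDivisors_of_ne_zero hc)).mp h),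
    ?_⟩
  have coe_comp (f : K[X]) :
      (f.comp (Polynomial.C c * Polynomial.X) : K⟦X⟧) = PowerSeries.rescale c (f : K⟦X⟧) := by
    ext n
    rw [Polynomial.coeff_coe, Polynomial.comp_C_mul_X_coeff, coeff_rescale, Polynomial.coeff_coe,
      mul_comm]
  rw [coe_comp, coe_comp, ← h, map_mul]

/-- The Hankel matrix `(a (i + j))` of size `N` of a sequence. -/
def hankel {R : Type*} (a : ℕ → R) (N : ℕ) : Matrix (Fin N) (Fin N) R :=
  Matrix.of fun i j => a (i + j)

/-- The linear functional on polynomials sending `X ^ n` to `a n`. -/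
noncomputable def momentFunctional (a : ℕ → K) : K[X] →ₗ[K] K :=
  Polynomial.lsum fun n => a n • LinearMap.id

theorem momentFunctional_eq_sum (a : ℕ → K) {f : K[X]} {N : ℕ} (hf : f.natDegree < N) (i : ℕ) :
    momentFunctional a (f * Polynomial.X ^ i) = ∑ j ∈ Finset.range N, a (i + j) * f.coeff j := by
  have monomial_apply (n : ℕ) (c : K) : momentFunctional a (Polynomial.monomial n c) = a n * c := by
    simp [momentFunctional, Polynomial.lsum_apply]
  conv_lhs => rw [f.as_sum_range' N hf, Finset.sum_mul, map_sum]
  simp only [Polynomial.monomial_mul_X_pow, monomial_apply, add_comm i]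

theorem det_hankel_eq_zero_iff {a : ℕ → K} {N : ℕ} :
    (hankel a N).det = 0 ↔
      ∃ f : K[X], f ≠ 0 ∧ f.degree < N ∧
        ∀ i < N, momentFunctional a (f * Polynomial.X ^ i) = 0 := by
  have mulVec_coeff (f : K[X]) (hf : f.degree < N) (i : Fin N) (h0 : f ≠ 0) :
      (hankel a N).mulVec (fun j => f.coeff j) i =
        momentFunctional a (f * Polynomial.X ^ (i : ℕ)) := by
    rw [momentFunctional_eq_sum a ((Polynomial.natDegree_lt_iff_degree_lt h0).mpr hf),
      Finset.sum_range]
    rfl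
  rw [← Matrix.exists_mulVec_eq_zero_iff]
  constructor
  · rintro ⟨v, hv, hva⟩
    obtain ⟨⟨f, hf⟩, rfl⟩ := (Polynomial.degreeLTEquiv K N).surjective v
    rw [Polynomial.mem_degreeLT] at hf
    have h0 : f ≠ 0 := by
      rintro rfl
      exact hv (map_zero (Polynomial.degreeLTEquiv K N))
    refine ⟨f, h0, hf, fun i hi => ?_⟩
    rw [← mulVec_coeff f hf ⟨i, hi⟩ h0]
    exact congrFun hva ⟨i, hi⟩
  · rintro ⟨f, h0, hf, hfa⟩
    refine ⟨fun j => f.coeff j, fun hv => h0 ?_, ?_⟩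
    · ext j
      rcases lt_or_ge j N with hj | hj
      · exact congrFun hv ⟨j, hj⟩
      · exact Polynomial.coeff_eq_zero_of_degree_lt (hf.trans_le (by exact_mod_cast hj))
    · ext i
      rw [mulVec_coeff f hf i h0, hfa i i.2, Pi.zero_apply]

/-- Pairing `f` with `P * X ^ (s - deg f)` isolates the leading coefficient of `f`. -/
theorem momentFunctional_mul_X_pow_eq_zero {a : ℕ → K} {P f : K[X]} {s : ℕ} (hf : f ≠ 0)
    (hPf : P.natDegree ≤ f.natDegree) (hfs : f.natDegree ≤ s)
    (hfa : ∀ i ≤ s, momentFunctional a (f * Polynomial.X ^ i) = 0)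
    (hPa : ∀ i < s, momentFunctional a (P * Polynomial.X ^ i) = 0) :
    momentFunctional a (P * Polynomial.X ^ s) = 0 := by
  set t := f.natDegree
  have expand_P : momentFunctional a (f * (P * Polynomial.X ^ (s - t))) = 0 := by
    rw [mul_comm P, P.as_sum_range_C_mul_X_pow, Finset.mul_sum, Finset.mul_sum, map_sum]
    refine Finset.sum_eq_zero fun j hj => ?_
    rw [show f * (Polynomial.X ^ (s - t) * (Polynomial.C (P.coeff j) * Polynomial.X ^ j))
        = P.coeff j • (f * Polynomial.X ^ (s - t + j)) by
      rw [Polynomial.smul_eq_C_mul, pow_add]; ring, map_smul, hfa _ (by grind), smul_zero]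
  have expand_f : momentFunctional a (f * (P * Polynomial.X ^ (s - t)))
      = f.coeff t * momentFunctional a (P * Polynomial.X ^ s) := by
    conv_lhs => rw [f.as_sum_range_C_mul_X_pow, Finset.sum_mul, map_sum]
    have term (i : ℕ) : Polynomial.C (f.coeff i) * Polynomial.X ^ i * (P * Polynomial.X ^ (s - t))
        = f.coeff i • (P * Polynomial.X ^ (s - t + i)) := by
      rw [Polynomial.smul_eq_C_mul, pow_add]; ring
    simp only [term, map_smul, smul_eq_mul]
    rw [Finset.sum_range_succ, Finset.sum_eq_zero fun i hi => ?_, zero_add, Nat.sub_add_cancel hfs]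
    rw [hPa _ (by grind), mul_zero]
  have lead : f.coeff t ≠ 0 := Polynomial.leadingCoeff_ne_zero.mpr hf
  exact (mul_eq_zero.mp (expand_f.symm.trans expand_P)).resolve_left lead

theorem exists_momentFunctional_eq_zero {a : ℕ → K} {N : ℕ} (hN : (hankel a N).det ≠ 0)
    (h : ∀ M, N < M → (hankel a M).det = 0) :
    ∃ P : K[X], P ≠ 0 ∧ ∀ s, momentFunctional a (P * Polynomial.X ^ s) = 0 := by
  have le_natDegree (f : K[X]) (hf : f ≠ 0)
      (hfa : ∀ i < N, momentFunctional a (f * Polynomial.X ^ i) = 0) : N ≤ f.natDegree := by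
    by_contra! hlt
    exact hN (det_hankel_eq_zero_iff.mpr
      ⟨f, hf, (Polynomial.natDegree_lt_iff_degree_lt hf).mp hlt, hfa⟩)
  obtain ⟨P, hP, hPN, hPa⟩ := det_hankel_eq_zero_iff.mp (h (N + 1) N.lt_succ_self)
  have hPN' := (Polynomial.natDegree_lt_iff_degree_lt hP).mpr hPN
  refine ⟨P, hP, fun s => ?_⟩
  induction s using Nat.strong_induction_on with
  | _ s ih =>
  rcases Nat.lt_or_ge s (N + 1) with hs | hs
  · exact hPa s hs
  · obtain ⟨f, hf, hfs, hfa⟩ := det_hankel_eq_zero_iff.mp (h (s + 1) (by lia))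
    have hfs' := (Polynomial.natDegree_lt_iff_degree_lt hf).mpr hfs
    have hNf := le_natDegree f hf fun i hi => hfa i (by lia)
    exact momentFunctional_mul_X_pow_eq_zero hf (by lia) (by lia) (fun i hi => hfa i (by lia)) ih

theorem isRational_mk_of_momentFunctional {a : ℕ → K} {P : K[X]} (hP : P ≠ 0)
    (hPa : ∀ s, momentFunctional a (P * Polynomial.X ^ s) = 0) : IsRational (mk a) := by
  refine ⟨trunc P.natDegree ((P.reverse : K⟦X⟧) * mk a), P.reverse,
    mt Polynomial.reverse_eq_zero.mp hP, ?_⟩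
  ext n
  rw [Polynomial.coeff_coe, coeff_trunc]
  split_ifs with hn
  · rfl
  obtain ⟨m, rfl⟩ := Nat.exists_eq_add_of_le (not_lt.mp hn)
  have reverse_coeff_eq_zero : ∀ k ∈ Finset.range (P.natDegree + m + 1),
      k ∉ Finset.range (P.natDegree + 1) → P.reverse.coeff k * a (P.natDegree + m - k) = 0 := by
    intro k _ hk
    rw [Polynomial.coeff_eq_zero_of_natDegree_lt, zero_mul]
    exact P.reverse_natDegree_le.trans_lt (by simpa using hk)
  rw [← hPa m, momentFunctional_eq_sum a P.natDegree.lt_succ_self, coeff_mul,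
    Finset.Nat.sum_antidiagonal_eq_sum_range_succ_mk]
  simp only [Polynomial.coeff_coe, coeff_mk]
  rw [← Finset.sum_subset (by grind) reverse_coeff_eq_zero, ← Finset.sum_range_reflect]
  refine Finset.sum_congr rfl fun k hk => ?_
  have hk' : k ≤ P.natDegree := by grind
  rw [Polynomial.coeff_reverse, Polynomial.revAt_le (by lia), mul_comm]
  congr 2 <;> lia

theorem isRational_mk_of_det_hankel_eq_zero {a : ℕ → K}
    (h : ∃ N₀, ∀ N ≥ N₀, (hankel a N).det = 0) : IsRational (mk a) := by
  classical
  obtain ⟨N₀, hN₀⟩ := h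
  have hzero : (hankel a 0).det ≠ 0 := by simp
  obtain ⟨P, hP, hPa⟩ := exists_momentFunctional_eq_zero
    (Nat.findGreatest_spec (P := fun N => (hankel a N).det ≠ 0) (Nat.zero_le N₀) hzero)
    fun M hM => (le_or_gt N₀ M).elim (hN₀ M) fun hlt =>
      not_not.mp (Nat.findGreatest_is_greatest hM hlt.le)
  exact isRational_mk_of_momentFunctional hP hPa

end Rationality

section HankelTraces

variable {R : Type*} [CommRing R]

/-- The coefficients of `f` in degree `c + i` are divisible by `β ^ i`. -/
def CoeffDvdAfter (β : R) (c : ℕ) (f : R[X]) : Prop :=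
  ∀ j, β ^ (j - c) ∣ f.coeff j

namespace CoeffDvdAfter

variable {β : R}

theorem mono {c c' : ℕ} {f : R[X]} (hf : CoeffDvdAfter β c f) (h : c ≤ c') :
    CoeffDvdAfter β c' f :=
  fun j => (pow_dvd_pow β (by lia)).trans (hf j)

theorem C (r : R) : CoeffDvdAfter β 0 (Polynomial.C r) := by
  intro j
  rcases eq_or_ne j 0 with rfl | hj
  · simp
  · rw [Polynomial.coeff_C_of_ne_zero hj]
    exact dvd_zero _

theorem mul {c c' : ℕ} {f g : R[X]} (hf : CoeffDvdAfter β c f) (hg : CoeffDvdAfter β c' g) :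
    CoeffDvdAfter β (c + c') (f * g) := by
  intro j
  rw [Polynomial.coeff_mul]
  refine Finset.dvd_sum fun x hx => ?_
  have hx' := Finset.HasAntidiagonal.mem_antidiagonal.mp hx
  refine (pow_dvd_pow β ?_).trans (pow_add β _ _ ▸ mul_dvd_mul (hf x.1) (hg x.2))
  lia

theorem sum {α : Type*} {s : Finset α} {c : ℕ} {f : α → R[X]}
    (h : ∀ i ∈ s, CoeffDvdAfter β c (f i)) : CoeffDvdAfter β c (∑ i ∈ s, f i) := by
  intro j
  rw [Polynomial.finsetSum_coeff]
  exact Finset.dvd_sum fun i hi => h i hi j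

theorem prod {α : Type*} {s : Finset α} {c : α → ℕ} {f : α → R[X]}
    (h : ∀ i ∈ s, CoeffDvdAfter β (c i) (f i)) :
    CoeffDvdAfter β (∑ i ∈ s, c i) (∏ i ∈ s, f i) := by
  classical
  induction s using Finset.induction_on with
  | empty => simpa using C (β := β) 1
  | insert a s ha ih =>
    rw [Finset.sum_insert ha, Finset.prod_insert ha]
    exact (h a (by simp)).mul (ih fun i hi => h i (by simp [hi]))

theorem det {ι : Type*} [Fintype ι] [DecidableEq ι] {M : Matrix ι ι R[X]} {c : ι → ℕ}
    (h : ∀ i j, CoeffDvdAfter β (c i) (M i j)) : CoeffDvdAfter β (∑ i, c i) M.det := by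
  rw [Matrix.det_apply']
  refine sum fun σ _ => ?_
  have hσ := (C (β := β) ((Equiv.Perm.sign σ : ℤ) : R)).mul
    (prod (s := Finset.univ) fun i _ => h (σ i) i)
  rwa [zero_add, Equiv.sum_comp σ c, Polynomial.C_eq_intCast] at hσ

end CoeffDvdAfter

variable {ι : Type*} [Fintype ι] [DecidableEq ι]

theorem coeffDvdAfter_adjugate {β : R} {A : Matrix ι ι R} {T : Finset ι}
    (hT : ∀ i ∉ T, ∀ j, β ∣ A i j) (i j : ι) :
    CoeffDvdAfter β T.card ((1 - (Polynomial.X : R[X]) • A.map Polynomial.C).adjugate i j) := by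
  rw [Matrix.adjugate_apply, ← Finset.filter_univ_mem T, Finset.card_filter]
  refine CoeffDvdAfter.det fun r k => ?_
  rcases eq_or_ne r j with rfl | hr
  · rw [Matrix.updateRow_self, Pi.single_apply, ← Polynomial.C_1, ← Polynomial.C_0]
    split_ifs <;> exact (CoeffDvdAfter.C _).mono (Nat.zero_le _)
  · rw [Matrix.updateRow_ne hr]
    intro m
    have entry : (1 - (Polynomial.X : R[X]) • A.map Polynomial.C) r k =
        Polynomial.C ((1 : Matrix ι ι R) r k) - Polynomial.X * Polynomial.C (A r k) := by
      simp [Matrix.one_apply, apply_ite Polynomial.C]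
    rw [entry]
    rcases m with _ | _ | m
    · simp
    · by_cases hrT : r ∈ T
      · simp [hrT]
      · simpa [hrT, Polynomial.coeff_C] using hT r hrT k
    · simp

theorem coeff_matPolyEquiv_adjugate (A : Matrix ι ι R) (j : ℕ) :
    (matPolyEquiv (1 - (Polynomial.X : R[X]) • A.map Polynomial.C).adjugate).coeff j =
      ∑ k ∈ Finset.range (j + 1), A.charpolyRev.coeff (j - k) • A ^ k := by
  set P := matPolyEquiv (1 - (Polynomial.X : R[X]) • A.map Polynomial.C).adjugate
  have recursion :
      P = A.charpolyRev.map (algebraMap R (Matrix ι ι R)) + P * Polynomial.X * Polynomial.C A := by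
    have h := congrArg matPolyEquiv
      (Matrix.adjugate_mul (1 - (Polynomial.X : R[X]) • A.map Polynomial.C))
    rw [map_mul, map_sub, map_one, matPolyEquiv_map_smul, matPolyEquiv_map_C, Polynomial.map_X,
      mul_sub, mul_one, ← mul_assoc, sub_eq_iff_eq_add] at h
    exact h.trans (congrArg (· + _) (matPolyEquiv_smul_one _))
  have algebraMap_eq (r : R) : algebraMap R (Matrix ι ι R) r = r • (1 : Matrix ι ι R) :=
    Algebra.algebraMap_eq_smul_one r
  induction j with
  | zero => rw [recursion]; simp [algebraMap_eq]
  | succ j ih =>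
    rw [recursion, Polynomial.coeff_add, Polynomial.coeff_mul_C, Polynomial.coeff_mul_X, ih,
      Polynomial.coeff_map, algebraMap_eq, Finset.sum_range_succ' _ (j + 1), Finset.sum_mul,
      add_comm]
    simp only [Matrix.smul_mul, ← pow_succ, Nat.add_sub_add_right, Nat.sub_zero, pow_zero]

theorem prod_dvd_det {N : ℕ} {M : Matrix (Fin N) (Fin N) R} {x : Fin N → R}
    (h : ∀ i j, x j ∣ M i j) : ∏ j, x j ∣ M.det := by
  rw [Matrix.det_apply]
  exact Finset.dvd_sum fun σ _ =>
    dvd_smul_of_dvd _ (Finset.prod_dvd_prod_of_dvd _ _ fun j _ => h _ j)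

/-- Column operations by the unitriangular matrix `(c (j - i))`. -/
theorem prod_dvd_det_hankel {a c : ℕ → R} {N : ℕ} {x : Fin N → R} (hc : c 0 = 1)
    (h : ∀ i j : Fin N, x j ∣ ∑ k ∈ Finset.range (j + 1), c (j - k) * a (i + k)) :
    ∏ j, x j ∣ (hankel a N).det := by
  let U : Matrix (Fin N) (Fin N) R := Matrix.of fun k j => if k ≤ j then c (j - k) else 0
  have hU : U.det = 1 := by
    have upper : U.BlockTriangular id := fun i j hij => if_neg (not_le.mpr hij)
    rw [Matrix.det_of_isUpperTriangular upper]
    simp [U, hc]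
  rw [← mul_one (hankel a N).det, ← hU, ← Matrix.det_mul]
  refine prod_dvd_det fun i j => ?_
  have entry : (hankel a N * U) i j = ∑ k ∈ Finset.range (j + 1), c (j - k) * a (i + k) := by
    rw [Matrix.mul_apply]
    simp only [hankel, U, Matrix.of_apply, mul_ite, mul_zero, Fin.le_def]
    rw [← Finset.sum_range fun k => if k ≤ (j : ℕ) then a (i + k) * c (j - k) else 0,
      ← Finset.sum_filter]
    exact Finset.sum_congr (by grind) fun k _ => mul_comm _ _
  exact entry ▸ h i j

theorem pow_dvd_det_hankel_trace {β : R} {S A : Matrix ι ι R} {T : Finset ι}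
    (hT : ∀ i ∉ T, ∀ j, β ∣ A i j) (N : ℕ) :
    β ^ (∑ j ∈ Finset.range N, (j - T.card)) ∣
      (hankel (fun m => (S * A ^ (m + 1)).trace) N).det := by
  rw [Finset.sum_range, ← Finset.prod_pow_eq_pow_sum]
  have coeff_zero : A.charpolyRev.coeff 0 = 1 := by
    rw [Polynomial.coeff_zero_eq_eval_zero, Matrix.eval_charpolyRev]
  refine prod_dvd_det_hankel coeff_zero fun i j => ?_
  have combine : ∑ k ∈ Finset.range (j + 1),
      A.charpolyRev.coeff (j - k) * (S * A ^ ((i : ℕ) + k + 1)).trace =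
      (S * A ^ ((i : ℕ) + 1) * ∑ k ∈ Finset.range ((j : ℕ) + 1),
        A.charpolyRev.coeff (j - k) • A ^ k).trace := by
    rw [Matrix.mul_sum, Matrix.trace_sum]
    refine Finset.sum_congr rfl fun k _ => ?_
    rw [Matrix.mul_smul, Matrix.trace_smul, smul_eq_mul, mul_assoc, ← pow_add, add_right_comm]
  rw [combine, ← coeff_matPolyEquiv_adjugate, Matrix.trace]
  refine Finset.dvd_sum fun k _ => ?_
  rw [Matrix.diag_apply, Matrix.mul_apply]
  refine Finset.dvd_sum fun l _ => ?_
  rw [matPolyEquiv_coeff_apply]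
  exact (coeffDvdAfter_adjugate hT l k j).mul_left _

end HankelTraces

section CompactTraces

universe u v

variable {R : Type v} [CommRing R]

/-- The sequence is `m ↦ tr (S * A ^ (m + 1))` for finite matrices `S` and `A`, where at most `C`
rows of `A` are not divisible by `β`. -/
def IsCompactTrace (β : R) (C : ℕ) (a : ℕ → R) : Prop :=
  ∃ (ι : Type u) (_ : Fintype ι) (_ : DecidableEq ι) (S A : Matrix ι ι R) (T : Finset ι),
    T.card ≤ C ∧ (∀ i ∉ T, ∀ j, β ∣ A i j) ∧ ∀ m, a m = (S * A ^ (m + 1)).trace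

/-- To every `ϖ`-adic precision `K` the sequence is a sequence of traces of powers of matrices
which are uniformly completely continuous: for each `B`, the number of rows not divisible by
`ϖ ^ B` is bounded independently of `K`. -/
def HasCompactTrace (ϖ : R) (a : ℕ → R) : Prop :=
  ∀ B : ℕ, ∃ C : ℕ, ∀ K : ℕ, ∃ b : ℕ → R, IsCompactTrace.{u} (ϖ ^ B) C b ∧
    ∀ m, ϖ ^ K ∣ a m - b m

namespace IsCompactTrace

variable {β : R} {C C' : ℕ} {a a' : ℕ → R}

theorem zero : IsCompactTrace.{u} β 0 0 :=
  ⟨PEmpty, inferInstance, inferInstance, 0, 0, ∅, by simp⟩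

theorem add (ha : IsCompactTrace.{u} β C a) (ha' : IsCompactTrace.{u} β C' a') :
    IsCompactTrace.{u} β (C + C') (a + a') := by
  obtain ⟨ι, _, _, S, A, T, hcard, hdvd, htrace⟩ := ha
  obtain ⟨ι', _, _, S', A', T', hcard', hdvd', htrace'⟩ := ha'
  refine ⟨ι ⊕ ι', inferInstance, inferInstance, Matrix.fromBlocks S 0 0 S',
    Matrix.fromBlocks A 0 0 A', T.disjSum T', ?_, ?_, fun m => ?_⟩
  · rw [Finset.card_disjSum]
    exact add_le_add hcard hcard'
  · rintro (i | i) hi (j | j)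
    · exact hdvd i (by simpa using hi) j
    · exact dvd_zero _
    · exact dvd_zero _
    · exact hdvd' i (by simpa using hi) j
  · simp [Matrix.fromBlocks_diagonal_pow, Matrix.fromBlocks_multiply, htrace, htrace',
      Matrix.trace]

theorem sum {α : Type*} {s : Finset α} {C : α → ℕ} {a : α → ℕ → R}
    (h : ∀ i ∈ s, IsCompactTrace.{u} β (C i) (a i)) :
    IsCompactTrace.{u} β (∑ i ∈ s, C i) (∑ i ∈ s, a i) := by
  induction s using Finset.cons_induction with
  | empty => simpa using zero
  | cons i s hi ih =>
    rw [Finset.sum_cons, Finset.sum_cons]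
    exact (h i (Finset.mem_cons_self i s)).add (ih fun j hj => h j (Finset.mem_cons_of_mem hj))

theorem const_mul_pow (ha : IsCompactTrace.{u} β C a) (c d : R) :
    IsCompactTrace.{u} β C fun m => c * d ^ (m + 1) * a m := by
  obtain ⟨ι, _, _, S, A, T, hcard, hdvd, htrace⟩ := ha
  refine ⟨ι, inferInstance, inferInstance, c • S, d • A, T, hcard,
    fun i hi j => (hdvd i hi j).mul_left d, fun m => ?_⟩
  simp only [htrace, smul_pow, Matrix.smul_mul, Matrix.mul_smul, smul_smul, Matrix.trace_smul,
    smul_eq_mul, mul_comm c]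

theorem prod_pow_sub_one_mul {α : Type*} (s : Finset α) (d : α → R)
    (ha : IsCompactTrace.{u} β C a) :
    IsCompactTrace.{u} β (2 ^ s.card * C) fun m => (∏ i ∈ s, (d i ^ (m + 1) - 1)) * a m := by
  induction s using Finset.cons_induction with
  | empty => simpa using ha
  | cons i s hi ih =>
    have := (ih.const_mul_pow 1 (d i)).add (ih.const_mul_pow (-1) 1)
    rw [← two_mul, ← mul_assoc, ← pow_succ', ← Finset.card_cons hi] at this
    convert this using 2 with m
    rw [Finset.prod_cons, Pi.add_apply]
    ring

end IsCompactTrace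

variable {ϖ : R}

theorem det_hankel_intCast (a : ℕ → ℤ) (N : ℕ) :
    (hankel (fun m => (a m : R)) N).det = ((hankel a N).det : R) :=
  (RingHom.map_det (Int.castRingHom R) (hankel a N)).symm

theorem sq_le_four_mul_sum_tsub {C N : ℕ} (h : 4 * C + 2 ≤ N) :
    N ^ 2 ≤ 4 * ∑ j ∈ Finset.range N, (j - C) := by
  have le_add : ∑ j ∈ Finset.range N, j ≤ ∑ j ∈ Finset.range N, (j - C) + N * C := by
    calc ∑ j ∈ Finset.range N, j ≤ ∑ j ∈ Finset.range N, (j - C + C) :=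
          Finset.sum_le_sum fun j _ => by lia
      _ = _ := by rw [Finset.sum_add_distrib, Finset.sum_const, Finset.card_range, smul_eq_mul]
  have gauss := Finset.sum_range_id_mul_two N
  obtain ⟨k, rfl⟩ : ∃ k, N = k + 1 := ⟨N - 1, by lia⟩
  rw [Nat.add_sub_cancel] at gauss
  nlinarith

theorem dvd_det_sub_det {n : Type*} [Fintype n] [DecidableEq n] {x : R} {M M' : Matrix n n R}
    (h : ∀ i j, x ∣ M i j - M' i j) : x ∣ M.det - M'.det := by
  simp only [← Ideal.mem_span_singleton, ← Ideal.Quotient.mk_eq_mk_iff_sub_mem] at h ⊢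
  rw [RingHom.map_det, RingHom.map_det]
  exact congrArg Matrix.det (Matrix.ext h)

theorem HasCompactTrace.exists_pow_dvd_det_hankel {a : ℕ → R} (ha : HasCompactTrace.{u} ϖ a)
    (E : ℕ) : ∃ N₀, ∀ N ≥ N₀, ϖ ^ (E * N ^ 2) ∣ (hankel a N).det := by
  obtain ⟨C, hC⟩ := ha (4 * E)
  refine ⟨4 * C + 2, fun N hN => ?_⟩
  obtain ⟨b, ⟨ι, _, _, S, A, T, hcard, hdvd, htrace⟩, hab⟩ := hC (E * N ^ 2)
  have dvd_trace : ϖ ^ (E * N ^ 2) ∣ (hankel b N).det := by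
    rw [funext htrace]
    refine dvd_trans ?_ (pow_dvd_det_hankel_trace hdvd N)
    rw [← pow_mul]
    refine pow_dvd_pow ϖ ?_
    calc E * N ^ 2 ≤ E * (4 * ∑ j ∈ Finset.range N, (j - T.card)) := by
          gcongr
          exact sq_le_four_mul_sum_tsub (by lia)
      _ = _ := by ring
  exact (dvd_iff_dvd_of_dvd_sub (dvd_det_sub_det fun i j : Fin N => hab (i + j))).mpr dvd_trace

theorem abs_det_hankel_lt {a : ℕ → ℤ} {c p N : ℕ} (hp : 1 < p) (hN : 0 < N)
    (ha : ∀ m, |a m| ≤ (c : ℤ) ^ (m + 1)) :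
    |(hankel a N).det| < (p : ℤ) ^ ((2 * (c + 1) ^ 2 + 1) * N ^ 2) := by
  set s := 2 * (c + 1) ^ 2
  have entry_le (i j : Fin N) : |hankel a N i j| ≤ ((c + 1 : ℕ) : ℤ) ^ (2 * N) :=
    calc |hankel a N i j| ≤ (c : ℤ) ^ (i + j + 1 : ℕ) := ha _
      _ ≤ ((c + 1 : ℕ) : ℤ) ^ (i + j + 1 : ℕ) := by gcongr; lia
      _ ≤ ((c + 1 : ℕ) : ℤ) ^ (2 * N) := by gcongr <;> lia
  have det_le := Matrix.det_le (abv := (AbsoluteValue.abs : AbsoluteValue ℤ ℤ)) entry_le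
  rw [Fintype.card_fin, nsmul_eq_mul] at det_le
  refine det_le.trans_lt ?_
  suffices h : N.factorial * ((c + 1) ^ (2 * N)) ^ N < p ^ ((s + 1) * N ^ 2) by exact_mod_cast h
  calc N.factorial * ((c + 1) ^ (2 * N)) ^ N ≤ (2 ^ N) ^ N * ((c + 1) ^ (2 * N)) ^ N := by
        gcongr
        exact N.factorial_le_pow.trans (Nat.pow_le_pow_left Nat.lt_two_pow_self.le N)
    _ = s ^ (N ^ 2) := by
        simp only [s, mul_pow, ← pow_mul]
        ring_nf
    _ ≤ (p ^ s) ^ (N ^ 2) := by gcongr; exact (Nat.lt_pow_self hp).le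
    _ = p ^ (s * N ^ 2) := by rw [← pow_mul]
    _ < _ := Nat.pow_lt_pow_right hp (by nlinarith [Nat.pow_pos (n := 2) hN])

/-- A nonzero integer cannot be both `p`-adically tiny and of moderate absolute value. -/
theorem HasCompactTrace.isRational {a : ℕ → ℤ} {c p s : ℕ} (hp : 1 < p)
    (hϖ : ∀ (M : ℕ) (n : ℤ), ϖ ^ (s * M) ∣ (n : R) → (p : ℤ) ^ M ∣ n)
    (ha : ∀ m, |a m| ≤ (c : ℤ) ^ (m + 1)) (htrace : HasCompactTrace.{u} ϖ fun m => (a m : R)) :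
    IsRational (mk fun m => (a m : ℚ)) := by
  obtain ⟨N₀, hN₀⟩ := htrace.exists_pow_dvd_det_hankel (s * (2 * (c + 1) ^ 2 + 1))
  refine isRational_mk_of_det_hankel_eq_zero ⟨N₀ + 1, fun N hN => ?_⟩
  have dvd_det := hN₀ N (by lia)
  rw [det_hankel_intCast, mul_assoc] at dvd_det
  rw [det_hankel_intCast, Int.cast_eq_zero]
  exact Int.eq_zero_of_abs_lt_dvd (hϖ _ _ dvd_det) (abs_det_hankel_lt hp (by lia) ha)

end CompactTraces

section ArtinHasse

variable {S : Type*} [CommRing S]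

/-- `l` is the logarithmic derivative `X * F' / F` of the power series `F`, which is normalised to
have constant coefficient `1`. -/
structure IsLogDeriv (F l : S⟦X⟧) : Prop where
  constantCoeff_left : constantCoeff F = 1
  X_mul_derivative : X * derivative S F = l * F

theorem coeff_X_mul_derivative (F : S⟦X⟧) (n : ℕ) :
    coeff n (X * derivative S F) = n * coeff n F := by
  cases n with
  | zero => simp
  | succ n => rw [coeff_succ_X_mul, coeff_derivative, mul_comm, Nat.cast_succ]

namespace IsLogDeriv

variable {F G l m : S⟦X⟧}

theorem natCast_mul_coeff (h : IsLogDeriv F l) (n : ℕ) : n * coeff n F = coeff n (l * F) := by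
  rw [← h.X_mul_derivative, coeff_X_mul_derivative]

theorem coeff_zero_left (h : IsLogDeriv F l) : coeff 0 F = 1 :=
  (coeff_zero_eq_constantCoeff_apply F).trans h.constantCoeff_left

theorem coeff_zero_right (h : IsLogDeriv F l) : coeff 0 l = 0 := by
  have h0 := h.natCast_mul_coeff 0
  rw [Nat.cast_zero, zero_mul, coeff_zero_eq_constantCoeff_apply, map_mul, h.constantCoeff_left,
    mul_one] at h0
  exact (coeff_zero_eq_constantCoeff_apply l).trans h0.symm

theorem coeff_one (h : IsLogDeriv F l) : coeff 1 F = coeff 1 l := by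
  have h1 := h.natCast_mul_coeff 1
  rwa [coeff_mul, Finset.Nat.sum_antidiagonal_succ, Finset.Nat.antidiagonal_zero,
    Finset.sum_singleton, h.coeff_zero_right, h.coeff_zero_left, zero_mul, zero_add, mul_one,
    Nat.cast_one, one_mul] at h1

theorem mul (hF : IsLogDeriv F l) (hG : IsLogDeriv G m) : IsLogDeriv (F * G) (l + m) where
  constantCoeff_left := by rw [map_mul, hF.constantCoeff_left, hG.constantCoeff_left, mul_one]
  X_mul_derivative := by
    rw [Derivation.leibniz, smul_eq_mul, smul_eq_mul]
    linear_combination G * hF.X_mul_derivative + F * hG.X_mul_derivative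

theorem prod {α : Type*} {s : Finset α} {F l : α → S⟦X⟧} (h : ∀ i ∈ s, IsLogDeriv (F i) (l i)) :
    IsLogDeriv (∏ i ∈ s, F i) (∑ i ∈ s, l i) := by
  classical
  induction s using Finset.induction_on with
  | empty => exact ⟨by simp, by simp⟩
  | insert x s hx ih =>
    rw [Finset.sum_insert hx, Finset.prod_insert hx]
    exact (h x (by simp)).mul (ih fun i hi => h i (by simp [hi]))

theorem pow (h : IsLogDeriv F l) (k : ℕ) : IsLogDeriv (F ^ k) (k • l) := by
  simpa using prod (s := Finset.range k) fun _ _ => h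

theorem rescale (h : IsLogDeriv F l) (y : S) :
    IsLogDeriv (PowerSeries.rescale y F) (PowerSeries.rescale y l) where
  constantCoeff_left := by
    rw [← coeff_zero_eq_constantCoeff_apply, coeff_rescale, pow_zero, one_mul, h.coeff_zero_left]
  X_mul_derivative := by
    ext n
    rw [coeff_X_mul_derivative, ← map_mul, coeff_rescale, coeff_rescale, ← h.natCast_mul_coeff]
    ring

theorem map {S' : Type*} [CommRing S'] (h : IsLogDeriv F l) (φ : S →+* S') :
    IsLogDeriv (PowerSeries.map φ F) (PowerSeries.map φ l) where
  constantCoeff_left := by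
    rw [← coeff_zero_eq_constantCoeff_apply, coeff_map, h.coeff_zero_left, map_one]
  X_mul_derivative := by
    ext n
    rw [coeff_X_mul_derivative, ← map_mul, coeff_map, coeff_map, ← h.natCast_mul_coeff, map_mul,
      map_natCast]

theorem one_sub_X_pow {n : ℕ} (hn : 0 < n) :
    IsLogDeriv (1 - X ^ n : S⟦X⟧)
      (PowerSeries.mk fun m => if 0 < m ∧ n ∣ m then -(n : S) else 0) where
  constantCoeff_left := by simp [hn.ne']
  X_mul_derivative := by
    ext m
    rw [coeff_X_mul_derivative, mul_sub, mul_one, map_sub, map_sub, coeff_mul_X_pow', coeff_mk,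
      coeff_X_pow, PowerSeries.coeff_one]
    rcases eq_or_ne m 0 with rfl | h0
    · simp [hn.ne]
    rcases eq_or_ne m n with rfl | hmn
    · simp [h0]
    by_cases hle : n ≤ m
    · have dvd_sub : n ∣ m - n ↔ n ∣ m := Nat.dvd_sub_iff_left hle dvd_rfl
      simp [hle, dvd_sub, h0, hmn, Nat.pos_of_ne_zero h0, lt_of_le_of_ne hle hmn.symm]
    · have not_dvd : ¬ n ∣ m := fun hd => hle (Nat.le_of_dvd (by lia) hd)
      simp [h0, hmn, hle, not_dvd]

theorem dvd_factorial_mul_coeff_sub {x : S} (hF : IsLogDeriv F l) (hG : IsLogDeriv G m) {K n : ℕ}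
    (hn : n < K) (h : ∀ i < K, x ∣ coeff i l - coeff i m) :
    x ∣ n.factorial * (coeff n F - coeff n G) := by
  induction n using Nat.strong_induction_on with
  | _ n ih =>
  rcases n with _ | n
  · simp [hF.coeff_zero_left, hG.coeff_zero_left]
  have recursion : ((n + 1).factorial : S) * (coeff (n + 1) F - coeff (n + 1) G) =
      n.factorial * (coeff (n + 1) (l * F) - coeff (n + 1) (m * G)) := by
    rw [← hF.natCast_mul_coeff, ← hG.natCast_mul_coeff, Nat.factorial_succ]
    push_cast
    ring
  rw [recursion, coeff_mul, coeff_mul, ← Finset.sum_sub_distrib, Finset.mul_sum]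
  refine Finset.dvd_sum fun ⟨a, b⟩ hab => ?_
  replace hab : a + b = n + 1 := Finset.HasAntidiagonal.mem_antidiagonal.mp hab
  rcases Nat.eq_zero_or_pos a with rfl | ha
  · simp [hF.coeff_zero_right, hG.coeff_zero_right]
  obtain ⟨c, hc⟩ := Nat.factorial_dvd_factorial (show b ≤ n by lia)
  have split : (n.factorial : S) * (coeff a l * coeff b F - coeff a m * coeff b G) =
      n.factorial * coeff b F * (coeff a l - coeff a m) +
        c * coeff a m * (b.factorial * (coeff b F - coeff b G)) := by
    rw [hc]
    push_cast
    ring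
  exact split ▸ dvd_add ((h a (by lia)).mul_left _) ((ih b (by lia) (by lia)).mul_left _)

end IsLogDeriv

theorem sum_moebius_divisors_filter_not_dvd {p m : ℕ} (hp : p.Prime) (hm : m ≠ 0) :
    ∑ n ∈ m.divisors with ¬ p ∣ n, ArithmeticFunction.moebius n =
      if m = p ^ m.factorization p then 1 else 0 := by
  set m' := m / p ^ m.factorization p
  have factor : p ^ m.factorization p * m' = m := Nat.ordProj_mul_ordCompl_eq_self m p
  have coprime : Nat.Coprime p m' := Nat.coprime_ordCompl hp hm
  have divisors_eq : {n ∈ m.divisors | ¬ p ∣ n} = m'.divisors := by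
    ext n
    simp only [Finset.mem_filter, Nat.mem_divisors]
    constructor
    · rintro ⟨⟨hnm, -⟩, hpn⟩
      have hn : Nat.Coprime n (p ^ m.factorization p) :=
        ((hp.coprime_iff_not_dvd.mpr hpn).symm).pow_right _
      exact ⟨hn.dvd_of_dvd_mul_left (factor.symm ▸ hnm), (Nat.ordCompl_pos p hm).ne'⟩
    · rintro ⟨hnm, -⟩
      exact ⟨⟨hnm.trans (Nat.ordCompl_dvd m p), hm⟩, fun hpn =>
        hp.one_lt.ne' (Nat.Coprime.eq_one_of_dvd coprime (hpn.trans hnm))⟩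
  have eq_one_iff : m' = 1 ↔ m = p ^ m.factorization p := by
    conv_rhs => lhs; rw [← factor]
    rw [mul_eq_left₀ (pow_ne_zero _ hp.ne_zero)]
  rw [divisors_eq, ← ArithmeticFunction.coe_mul_zeta_apply,
    ArithmeticFunction.moebius_mul_coe_zeta, ArithmeticFunction.one_apply]
  simp only [eq_one_iff]

theorem exists_natCast_mul_modEq {n N : ℕ} (h : n.Coprime N) (hN : N ≠ 0) (t : ℤ) :
    ∃ k : ℕ, (k : ℤ) * n ≡ t [ZMOD N] := by
  obtain ⟨y, hy⟩ := Int.mod_coprime h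
  obtain ⟨k, -, hk⟩ := Int.existsUnique_equiv_nat (y * t) (b := N) (by lia)
  refine ⟨k, ?_⟩
  calc (k : ℤ) * n ≡ y * t * n [ZMOD N] := hk.mul_right _
    _ = n * y * t := by ring
    _ ≡ 1 * t [ZMOD N] := hy.mul_right _
    _ = t := one_mul t

/-- An integral polynomial approximation of the Artin–Hasse exponential
`∏_{p ∤ n} (1 - X ^ n) ^ (-μ(n) / n)`. -/
theorem exists_isLogDeriv_artinHasse {p : ℕ} (hp : p.Prime) (M K : ℕ) :
    ∃ (E : ℤ[X]) (l : ℤ⟦X⟧), IsLogDeriv (E : ℤ⟦X⟧) l ∧ ∀ m ≠ 0, m < K →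
      (p : ℤ) ^ M ∣ coeff m l - if m = p ^ m.factorization p then 1 else 0 := by
  have exponent (n : ℕ) : ∃ k : ℕ, ¬ p ∣ n →
      (k : ℤ) * n ≡ -ArithmeticFunction.moebius n [ZMOD (p ^ M : ℕ)] := by
    by_cases hpn : p ∣ n
    · exact ⟨0, fun h => absurd hpn h⟩
    · obtain ⟨k, hk⟩ := exists_natCast_mul_modEq
        (((hp.coprime_iff_not_dvd.mpr hpn).symm).pow_right M) (pow_ne_zero M hp.ne_zero) _
      exact ⟨k, fun _ => hk⟩
  choose k hk using exponent
  set s := {n ∈ Finset.Ico 1 K | ¬ p ∣ n}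
  refine ⟨∏ n ∈ s, (1 - Polynomial.X ^ n) ^ k n,
    ∑ n ∈ s, k n • mk fun m => if 0 < m ∧ n ∣ m then -(n : ℤ) else 0, ?_, fun m hm hmK => ?_⟩
  · have coe_prod : ((∏ n ∈ s, (1 - Polynomial.X ^ n) ^ k n : ℤ[X]) : ℤ⟦X⟧) =
        ∏ n ∈ s, (1 - X ^ n) ^ k n := by
      rw [← Polynomial.coeToPowerSeries.ringHom_apply, map_prod]
      simp
    rw [coe_prod]
    refine IsLogDeriv.prod fun n hn => (IsLogDeriv.one_sub_X_pow ?_).pow _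
    exact (Finset.mem_Ico.mp (Finset.mem_filter.mp hn).1).1
  · have filter_eq : {n ∈ s | n ∣ m} = {n ∈ m.divisors | ¬ p ∣ n} := by
      ext n
      simp only [s, Finset.mem_filter, Finset.mem_Ico, Nat.mem_divisors]
      have dvd_bound (hd : n ∣ m) : 1 ≤ n ∧ n < K :=
        ⟨Nat.pos_of_dvd_of_pos hd (by lia), (Nat.le_of_dvd (by lia) hd).trans_lt hmK⟩
      tauto
    rw [map_sum, ← sum_moebius_divisors_filter_not_dvd hp hm, ← filter_eq,
      Finset.sum_filter (fun n => n ∣ m), ← Finset.sum_sub_distrib]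
    refine Finset.dvd_sum fun n hn => ?_
    rw [map_nsmul, coeff_mk]
    by_cases hd : n ∣ m
    · have moebius_modEq := (hk n (Finset.mem_filter.mp hn).2).dvd
      rw [if_pos ⟨Nat.pos_of_ne_zero hm, hd⟩, if_pos hd, nsmul_eq_mul, mul_neg,
        ← neg_add', add_comm, neg_add', ← Nat.cast_pow]
      exact moebius_modEq
    · simp [hd]

theorem pow_dvd_of_pow_dvd_natCast_mul [IsDomain S] {p : ℕ} (hp : p.Prime) (hpS : (p : S) ≠ 0)
    {k K : ℕ} (hk : k ≠ 0) {x : S} (h : (p : S) ^ (k + K) ∣ k * x) : (p : S) ^ K ∣ x := by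
  obtain ⟨v, k', hk', rfl⟩ := Nat.exists_eq_pow_mul_and_not_dvd hk p hp.ne_one
  have le_mul : v ≤ p ^ v * k' :=
    (Nat.lt_pow_self hp.one_lt).le.trans
      (Nat.le_mul_of_pos_right _ (Nat.pos_of_ne_zero fun h => hk' (h ▸ dvd_zero p)))
  have cancel : (p : S) ^ v * p ^ K ∣ p ^ v * (k' * x) := by
    rw [← pow_add, ← mul_assoc]
    exact (pow_dvd_pow _ (Nat.add_le_add_right le_mul K)).trans (by exact_mod_cast h)
  have coprime : IsCoprime ((p : S) ^ K) (k' : S) := by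
    have := Nat.isCoprime_iff_coprime.mpr (hp.coprime_iff_not_dvd.mpr hk')
    simpa using (this.map (Int.castRingHom S)).pow_left
  exact coprime.dvd_of_dvd_mul_left ((mul_dvd_mul_iff_left (pow_ne_zero v hpS)).mp cancel)

theorem sum_pow_pow_add {y : S} {p f : ℕ} (hy : y ^ p ^ f = y) (i : ℕ) :
    ∑ j ∈ Finset.range f, y ^ p ^ (j + i) = ∑ j ∈ Finset.range f, y ^ p ^ j := by
  induction i with
  | zero => rfl
  | succ i ih =>
    have first_eq_last : y ^ p ^ (f + i) = y ^ p ^ (0 + i) := by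
      rw [pow_add, pow_mul, hy, zero_add]
    rw [← ih, ← add_left_inj (y ^ p ^ (0 + i))]
    conv_rhs => rw [← first_eq_last, ← Finset.sum_range_succ fun j => y ^ p ^ (j + i)]
    rw [Finset.sum_range_succ' fun j => y ^ p ^ (j + i)]
    simp only [add_right_comm, add_assoc]

theorem dvd_coeff_sum_rescale_sub {x : S} {p f : ℕ} {y a : S} {l : S⟦X⟧} {m : ℕ}
    (hy : y ^ p ^ f = y) (ha : x ∣ ∑ j ∈ Finset.range f, y ^ p ^ j - a)
    (hl : x ∣ coeff m l - if m = p ^ m.factorization p then 1 else 0) :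
    x ∣ coeff m (∑ j ∈ Finset.range f, PowerSeries.rescale (y ^ p ^ j) l) - a * coeff m l := by
  simp only [map_sum, coeff_rescale]
  rw [← Finset.sum_mul, ← sub_mul]
  split_ifs at hl with hm
  · rw [hm]
    simp only [← pow_mul, ← pow_add, sum_pow_pow_add hy]
    exact ha.mul_right _
  · rw [sub_zero] at hl
    exact hl.mul_left _

/-- Dwork splitting, on coefficients: if `y` is a Teichmüller element whose trace is `a`, then
`∏ E (y ^ p ^ j * X)` is `E ^ a` up to high powers of `p`. -/
theorem exists_artinHasse_splitting (S : Type*) [CommRing S] [IsDomain S] {p : ℕ} (hp : p.Prime)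
    (hpS : (p : S) ≠ 0) {K : ℕ} (hK : 2 ≤ K) :
    ∃ (M : ℕ) (E : ℤ[X]), E.coeff 0 = 1 ∧ (p : ℤ) ∣ E.coeff 1 - 1 ∧
      ∀ (y : S) (f a : ℕ), y ^ p ^ f = y →
        (p : S) ^ M ∣ ∑ j ∈ Finset.range f, y ^ p ^ j - a → ∀ n < K,
          (p : S) ^ K ∣
            coeff n (∏ j ∈ Finset.range f,
              PowerSeries.rescale (y ^ p ^ j) (PowerSeries.map (Int.castRingHom S) E)) -
            coeff n (PowerSeries.map (Int.castRingHom S) E ^ a) := by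
  obtain ⟨E, l, hE, hl⟩ := exists_isLogDeriv_artinHasse hp (K.factorial + K) K
  refine ⟨K.factorial + K, E, by rw [← Polynomial.coeff_coe, hE.coeff_zero_left], ?_, ?_⟩
  · have h1 := hl 1 one_ne_zero (by lia)
    rw [← hE.coeff_one, Polynomial.coeff_coe, Nat.factorization_one] at h1
    exact (dvd_pow_self _ (by lia)).trans h1
  intro y f a hy ha n hn
  have hES := hE.map (Int.castRingHom S)
  have logDeriv_close : ∀ m < K, (p : S) ^ (K.factorial + K) ∣
      coeff m (∑ j ∈ Finset.range f,
        PowerSeries.rescale (y ^ p ^ j) (PowerSeries.map (Int.castRingHom S) l)) -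
      coeff m (a • PowerSeries.map (Int.castRingHom S) l) := by
    intro m hm
    rw [map_nsmul, nsmul_eq_mul]
    rcases eq_or_ne m 0 with rfl | hm0
    · simp [coeff_rescale, hES.coeff_zero_right]
    · refine dvd_coeff_sum_rescale_sub hy ha ?_
      simpa using map_dvd (Int.castRingHom S) (hl m hm0 hm)
  have key := (IsLogDeriv.prod fun j _ => hES.rescale (y ^ p ^ j)).dvd_factorial_mul_coeff_sub
    (hES.pow a) hn logDeriv_close
  obtain ⟨c, hc⟩ := Nat.factorial_dvd_factorial hn.le
  refine pow_dvd_of_pow_dvd_natCast_mul hp hpS K.factorial_ne_zero (key.trans ⟨c, ?_⟩)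
  rw [hc]
  push_cast
  ring

end ArtinHasse

section Theta

universe u

variable {R : Type*} [CommRing R]

theorem pow_dvd_of_pow_dvd_intCast [IsDomain R] {p : ℕ} (hp : p.Prime) (hpR : (p : R) ≠ 0)
    (hunit : ¬IsUnit (p : R)) {M : ℕ} {n : ℤ} (h : (p : R) ^ M ∣ n) : (p : ℤ) ^ M ∣ n := by
  induction M generalizing n with
  | zero => simp
  | succ M ih =>
    have p_dvd : (p : ℤ) ∣ n := by
      by_contra hpn
      have coprime := ((Nat.prime_iff_prime_int.mp hp).coprime_iff_not_dvd.mpr hpn).map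
        (Int.castRingHom R)
      simp only [eq_intCast, Int.cast_natCast] at coprime
      exact hunit (coprime.isUnit_of_dvd' dvd_rfl ((dvd_pow_self _ M.succ_ne_zero).trans h))
    obtain ⟨k, rfl⟩ := p_dvd
    rw [pow_succ']
    refine mul_dvd_mul_left _ (ih ?_)
    rw [pow_succ', Int.cast_mul, Int.cast_natCast] at h
    exact (mul_dvd_mul_iff_left hpR).mp h

theorem dvd_sub_one_pow {p : ℕ} (hp : p.Prime) {ζ : R} (hζ : ζ ^ p = 1) :
    (p : R) ∣ (ζ - 1) ^ p := by
  obtain ⟨r, hr⟩ := exists_add_pow_prime_eq hp ζ (-1)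
  rw [sub_eq_add_neg, hr, hζ]
  refine dvd_add ?_ ⟨ζ * (-1) * r, by ring⟩
  rcases hp.eq_two_or_odd' with rfl | hodd
  · norm_num
  · simp [hodd.neg_one_pow]

theorem exists_pow_dvd_eval_sub {F : R[X]} {ϖ c : R} (h0 : ϖ ∣ F.coeff 0 - c)
    (h1 : ϖ ∣ F.coeff 1 - 1) (K : ℕ) : ∃ π, ϖ ∣ π ∧ ϖ ^ (K + 1) ∣ F.eval π - c := by
  induction K with
  | zero => exact ⟨0, dvd_zero _, by simpa [← Polynomial.coeff_zero_eq_eval_zero] using h0⟩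
  | succ K ih =>
    obtain ⟨π, hπ, r, hr⟩ := ih
    have derivative_close : ϖ ∣ F.derivative.eval π - 1 := by
      have at_zero := (hπ.trans (by simp)).trans (Polynomial.sub_dvd_eval_sub π 0 F.derivative)
      rw [← Polynomial.coeff_zero_eq_eval_zero, Polynomial.coeff_derivative] at at_zero
      simpa using dvd_add at_zero h1
    obtain ⟨t, ht⟩ := derivative_close
    -- One Newton step; the derivative is close enough to `1` that no division is needed.
    obtain ⟨k, hk⟩ := F.binomExpansion π (-(ϖ ^ (K + 1) * r))
    refine ⟨π + -(ϖ ^ (K + 1) * r),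
      dvd_add hπ ((dvd_pow_self _ K.succ_ne_zero).mul_right _).neg_right, ?_⟩
    rw [hk, sub_eq_iff_eq_add.mp hr, sub_eq_iff_eq_add.mp ht]
    exact ⟨-t * r + k * ϖ ^ K * r ^ 2, by ring⟩

theorem pow_dvd_eval_sub_eval {P Q : R[X]} {ϖ π : R} {K : ℕ} (hπ : ϖ ∣ π)
    (h : ∀ n < K, ϖ ^ K ∣ P.coeff n - Q.coeff n) : ϖ ^ K ∣ P.eval π - Q.eval π := by
  rw [← Polynomial.eval_sub, Polynomial.eval_eq_sum_range]
  refine Finset.dvd_sum fun n _ => ?_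
  rcases lt_or_ge n K with hn | hn
  · exact (Polynomial.coeff_sub P Q n ▸ h n hn).mul_right _
  · exact ((pow_dvd_pow_of_dvd hπ K).trans (pow_dvd_pow π hn)).mul_left _

theorem rescale_coe (z : R) (F : R[X]) :
    PowerSeries.rescale z (F : R⟦X⟧) = (F.comp (Polynomial.C z * Polynomial.X) : R[X]) := by
  ext n
  rw [coeff_rescale, Polynomial.coeff_coe, Polynomial.coeff_coe, Polynomial.comp_C_mul_X_coeff,
    mul_comm]

theorem pow_dvd_prod_eval_sub {α : Type*} {s : Finset α} {z : α → R} {F : R[X]} {ϖ π : R}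
    {b K : ℕ} (hπ : ϖ ∣ π)
    (h : ∀ n < K, ϖ ^ K ∣
      coeff n (∏ i ∈ s, PowerSeries.rescale (z i) (F : R⟦X⟧)) - coeff n ((F : R⟦X⟧) ^ b)) :
    ϖ ^ K ∣ ∏ i ∈ s, F.eval (z i * π) - F.eval π ^ b := by
  simp only [rescale_coe] at h
  simp only [← Polynomial.coeToPowerSeries.ringHom_apply, ← map_prod, ← map_pow] at h
  simp only [Polynomial.coeToPowerSeries.ringHom_apply, Polynomial.coeff_coe] at h
  simpa [Polynomial.eval_prod] using pow_dvd_eval_sub_eval hπ h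

variable {p : ℕ} [Fact p.Prime] {k : Type*} [Field k]

variable (R p k) in
/-- The multiplicative Teichmüller section of reduction to the residue field, with values in an
algebra over the Witt vectors. -/
noncomputable def teichmuller [Algebra (WittVector p k) R] : k →*₀ R where
  toMonoidHom := (algebraMap (WittVector p k) R : WittVector p k →* R).comp
    (WittVector.teichmuller p)
  map_zero' := by simp

theorem teichmuller_apply [Algebra (WittVector p k) R] (x : k) :
    teichmuller R p k x = algebraMap (WittVector p k) R (WittVector.teichmuller p x) := rfl

theorem teichmuller_injective [Algebra (WittVector p k) R] [FaithfulSMul (WittVector p k) R] :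
    Function.Injective (teichmuller R p k) := by
  intro x y hxy
  have := FaithfulSMul.algebraMap_injective (WittVector p k) R hxy
  simpa only [WittVector.teichmuller_coeff_zero] using congrArg (WittVector.coeff · 0) this

variable [CharP k p] [PerfectRing k p]

theorem natCast_dvd_witt_iff {w : WittVector p k} :
    (p : WittVector p k) ∣ w ↔ WittVector.constantCoeff w = 0 := by
  rw [← Ideal.mem_span_singleton, ← RingHom.mem_ker, WittVector.ker_constantCoeff]

theorem exists_pow_dvd_sub_natCast_of_frobenius_eq (M : ℕ) {w : WittVector p k}
    (hw : WittVector.frobenius w = w) : ∃ a : ℕ, (p : WittVector p k) ^ M ∣ w - a := by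
  induction M generalizing w with
  | zero => exact ⟨0, by simp⟩
  | succ M ih =>
    have constantCoeff_fixed :
        WittVector.constantCoeff w ^ p = (WittVector.constantCoeff w : k) := by
      rw [WittVector.frobenius_eq_map_frobenius] at hw
      conv_rhs => rw [← hw]
      simp [WittVector.map_coeff, frobenius_def]
    obtain ⟨z, hz⟩ := (mem_bot_iff_intCast p k).mp
      ((Subfield.mem_bot_iff_pow_eq_self k p).mpr constantCoeff_fixed)
    have natCast_val : (((z : ZMod p).val : ℕ) : k) = z := by
      rw [← map_natCast (ZMod.castHom dvd_rfl k), ZMod.natCast_zmod_val, map_intCast]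
    set n := (z : ZMod p).val
    obtain ⟨v, hv⟩ : (p : WittVector p k) ∣ w - n := by
      rw [natCast_dvd_witt_iff, map_sub, map_natCast, natCast_val, hz, sub_self]
    have v_fixed : WittVector.frobenius v = v := by
      have := congrArg WittVector.frobenius hv
      rw [map_sub, map_mul, map_natCast, map_natCast, hw, hv] at this
      exact (mul_left_cancel₀ (WittVector.p_nonzero p k) this).symm
    obtain ⟨a, ha⟩ := ih v_fixed
    refine ⟨n + p * a, ?_⟩
    have : w - ((n + p * a : ℕ) : WittVector p k) = p * (v - a) := by
      rw [mul_sub, ← hv]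
      push_cast
      ring
    rw [this, pow_succ']
    exact mul_dvd_mul_left _ ha

theorem exists_pow_dvd_sum_teichmuller_sub {x : k} {f : ℕ} (hx : x ^ p ^ f = x) (M : ℕ) :
    ∃ a : ℕ, (p : WittVector p k) ^ (M + 1) ∣
        ∑ j ∈ Finset.range f, WittVector.teichmuller p x ^ p ^ j - a ∧
      (a : k) = ∑ j ∈ Finset.range f, x ^ p ^ j := by
  obtain ⟨a, ha⟩ := exists_pow_dvd_sub_natCast_of_frobenius_eq (p := p) (k := k) (M + 1)
    (w := ∑ j ∈ Finset.range f, WittVector.teichmuller p x ^ p ^ j) (by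
      have frobenius_teichmuller : WittVector.frobenius (WittVector.teichmuller p x) =
          WittVector.teichmuller p x ^ p := by
        rw [WittVector.frobenius_eq_map_frobenius, WittVector.map_teichmuller, frobenius_def,
          map_pow]
      simp only [map_sum, map_pow, frobenius_teichmuller, ← pow_mul, ← pow_succ']
      exact sum_pow_pow_add (by rw [← map_pow, hx]) 1)
  refine ⟨a, ha, ?_⟩
  have := natCast_dvd_witt_iff.mp ((dvd_pow_self _ M.succ_ne_zero).trans ha)
  rw [map_sub, map_natCast, map_sum, sub_eq_zero] at this
  simpa only [map_pow, WittVector.constantCoeff_apply, WittVector.teichmuller_coeff_zero]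
    using this.symm

variable [IsDomain R] [Algebra (WittVector p k) R]

theorem exists_dwork_splitting (k : Type*) [Field k] [CharP k p] [PerfectRing k p]
    [Algebra (WittVector p k) R] {ζ : R} (hζ : IsPrimitiveRoot ζ p) (hpR : (p : R) ≠ 0) (K : ℕ) :
    ∃ θ : R[X], (∀ n, (ζ - 1) ^ n ∣ θ.coeff n) ∧
      ∀ (x : k) (f a : ℕ), x ^ p ^ f = x → (a : k) = ∑ j ∈ Finset.range f, x ^ p ^ j →
        (ζ - 1) ^ K ∣
          ∏ j ∈ Finset.range f, θ.eval (teichmuller R p k x ^ p ^ j) - ζ ^ a := by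
  have hp : p.Prime := Fact.out
  have hϖp : ζ - 1 ∣ (p : R) := hζ.sub_one_dvd_natCast hp.one_lt
  obtain ⟨M, E, hE0, hE1, hE⟩ := exists_artinHasse_splitting R hp hpR (le_add_self : 2 ≤ K + 2)
  set F := E.map (Int.castRingHom R) with hF
  have hF1 : ζ - 1 ∣ F.coeff 1 - 1 := by
    simpa [hF] using hϖp.trans (by simpa using map_dvd (Int.castRingHom R) hE1)
  obtain ⟨π, hπ, hπζ⟩ := exists_pow_dvd_eval_sub (c := ζ) (by simp [hF, hE0, dvd_sub_comm]) hF1 K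
  refine ⟨F.comp (Polynomial.C π * Polynomial.X), fun n => ?_, fun x f a hx ha => ?_⟩
  · rw [Polynomial.comp_C_mul_X_coeff]
    exact (pow_dvd_pow_of_dvd hπ n).mul_left _
  obtain ⟨b, hb, hbx⟩ := exists_pow_dvd_sum_teichmuller_sub hx M
  have pow_a_eq : ζ ^ a = ζ ^ b :=
    pow_eq_pow_of_modEq ((CharP.natCast_eq_natCast k p).mp (ha.trans hbx.symm)) hζ.pow_eq_one
  have coeff_close := hE (teichmuller R p k x) f b (by rw [← map_pow, hx]) (by
    have := (pow_dvd_pow _ M.le_succ).trans (by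
      simpa using map_dvd (algebraMap (WittVector p k) R) hb)
    simpa [teichmuller_apply] using this)
  simp only [← Polynomial.polynomial_map_coe, ← hF] at coeff_close
  have eval_close := pow_dvd_prod_eval_sub hπ fun n hn =>
    (pow_dvd_pow_of_dvd hϖp (K + 2)).trans (coeff_close n hn)
  simp only [Polynomial.eval_comp, Polynomial.eval_mul, Polynomial.eval_C, Polynomial.eval_X,
    mul_comm π, pow_a_eq]
  simpa using dvd_add ((pow_dvd_pow _ (Nat.le_add_right K 2)).trans eval_close)
    ((pow_dvd_pow _ K.le_succ).trans (hπζ.trans (sub_dvd_pow_sub_pow _ ζ b)))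

theorem exists_isPrimitiveRoot_not_isUnit (A : Type u) [CommRing A] [IsDomain A] {n : ℕ}
    (hn : (n : A) ≠ 0) (hunit : ¬IsUnit (n : A)) :
    ∃ (B : Type u) (_ : CommRing B) (_ : IsDomain B) (_ : Algebra A B) (_ : FaithfulSMul A B)
      (ζ : B), IsPrimitiveRoot ζ n ∧ (n : B) ≠ 0 ∧ ¬IsUnit (n : B) := by
  let L := AlgebraicClosure (FractionRing A)
  have algebraMap_injective : Function.Injective (algebraMap A L) := by
    rw [IsScalarTower.algebraMap_eq A (FractionRing A) L]
    exact (algebraMap (FractionRing A) L).injective.comp (IsFractionRing.injective A _)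
  have : FaithfulSMul A L := (faithfulSMul_iff_algebraMap_injective A L).mpr algebraMap_injective
  let B := integralClosure A L
  have : FaithfulSMul A B := (faithfulSMul_iff_algebraMap_injective A B).mpr
    (Function.Injective.of_comp (f := algebraMap B L) algebraMap_injective)
  have : NeZero (n : L) := ⟨by
    rwa [← map_natCast (algebraMap A L), map_ne_zero_iff _ algebraMap_injective]⟩
  obtain ⟨ζ, hζ⟩ := HasEnoughRootsOfUnity.exists_primitiveRoot L n
  have ζ_integral : IsIntegral A ζ :=
    .of_pow (NeZero.pos_of_neZero_natCast L) (hζ.pow_eq_one ▸ isIntegral_one)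
  refine ⟨B, inferInstance, inferInstance, inferInstance, inferInstance, ⟨ζ, ζ_integral⟩, ?_,
    fun h => NeZero.ne (n : L) (congrArg Subtype.val h), fun h => hunit ?_⟩
  · exact .of_map_of_injective (f := algebraMap B L) hζ Subtype.val_injective
  · rw [← map_natCast (algebraMap A B)] at h
    exact isUnit_of_map_unit _ _ h

end Theta

section DworkMatrix

universe u v

open MvPolynomial (monomial expand)

variable {R : Type v} [CommRing R] {W : Type u}

/-- The norm `∏_{l < m} G(X ^ (q ^ l))` of `G` along the iterates of `X ↦ X ^ q`. -/
noncomputable def frobProd (q : ℕ) (G : MvPolynomial W R) (m : ℕ) : MvPolynomial W R :=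
  ∏ l ∈ Finset.range m, expand (q ^ l) G

theorem frobProd_succ (q : ℕ) (G : MvPolynomial W R) (m : ℕ) :
    frobProd q G (m + 1) = G * expand q (frobProd q G m) := by
  simp only [frobProd, Finset.prod_range_succ', pow_zero, MvPolynomial.expand_one_apply, map_prod,
    ← MvPolynomial.expand_mul, pow_succ', mul_comm]

theorem add_le_of_mem_support_frobProd {q : ℕ} (hq : 0 < q) {G : MvPolynomial W R} {B : W →₀ ℕ}
    (hB : ∀ a ∈ G.support, a + B ≤ q • B) {m : ℕ} {a : W →₀ ℕ}
    (ha : a ∈ (frobProd q G m).support) : a + B ≤ q ^ m • B := by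
  classical
  induction m generalizing a with
  | zero =>
    have : a = 0 := by
      by_contra h
      simp [frobProd, MvPolynomial.coeff_one, Ne.symm h] at ha
    simp [this]
  | succ m ih =>
    rw [frobProd_succ] at ha
    obtain ⟨b, hb, c, hc, rfl⟩ := Finset.mem_add.mp (MvPolynomial.support_mul _ _ ha)
    rw [MvPolynomial.support_expand _ hq.ne'] at hc
    obtain ⟨c', hc', rfl⟩ := Finset.mem_image.mp hc
    calc b + q • c' + B = b + B + q • c' := add_right_comm _ _ _
      _ ≤ q • B + q • c' := by gcongr; exact hB b hb
      _ = q • (c' + B) := by rw [← smul_add, add_comm]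
      _ ≤ q • q ^ m • B := by gcongr; exact ih hc'
      _ = q ^ (m + 1) • B := by rw [smul_smul, pow_succ']

/-- The coefficients of `G` are divisible by powers of `ϖ` growing linearly, with slope `1 / Δ`,
in the degree. -/
def HasDecay (ϖ : R) (Δ : ℕ) (G : MvPolynomial W R) : Prop :=
  ∀ a : W →₀ ℕ, ϖ ^ (a.degree ⌈/⌉ Δ) ∣ G.coeff a

namespace HasDecay

variable {ϖ : R} {Δ : ℕ}

theorem one : HasDecay ϖ Δ (1 : MvPolynomial W R) := by
  classical
  intro a
  rw [MvPolynomial.coeff_one]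
  split_ifs with h
  · simp [← h]
  · exact dvd_zero _

theorem mul (hΔ : 0 < Δ) {G H : MvPolynomial W R} (hG : HasDecay ϖ Δ G) (hH : HasDecay ϖ Δ H) :
    HasDecay ϖ Δ (G * H) := by
  classical
  intro a
  rw [MvPolynomial.coeff_mul]
  refine Finset.dvd_sum fun x hx => ?_
  rw [← Finset.HasAntidiagonal.mem_antidiagonal.mp hx, map_add]
  refine (pow_dvd_pow ϖ ?_).trans ((pow_add ϖ _ _).symm ▸ mul_dvd_mul (hG x.1) (hH x.2))
  rw [ceilDiv_le_iff_le_mul hΔ, mul_add]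
  exact add_le_add (le_smul_ceilDiv hΔ) (le_smul_ceilDiv hΔ)

theorem prod (hΔ : 0 < Δ) {α : Type*} {s : Finset α} {G : α → MvPolynomial W R}
    (hG : ∀ i ∈ s, HasDecay ϖ Δ (G i)) : HasDecay ϖ Δ (∏ i ∈ s, G i) :=
  Finset.prod_induction G _ (fun _ _ => mul hΔ) one hG

theorem aeval_monomial (hΔ : 0 < Δ) {θ : R[X]} (hθ : ∀ n, ϖ ^ n ∣ θ.coeff n) {w : W →₀ ℕ}
    (hw : w.degree ≤ Δ) (c : R) : HasDecay ϖ Δ (Polynomial.aeval (monomial w c) θ) := by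
  classical
  intro a
  rw [Polynomial.aeval_eq_sum_range, MvPolynomial.coeff_sum]
  refine Finset.dvd_sum fun n _ => ?_
  rw [MvPolynomial.monomial_pow, MvPolynomial.coeff_smul, MvPolynomial.coeff_monomial, smul_eq_mul]
  split_ifs with h
  · refine ((pow_dvd_pow ϖ ?_).trans (hθ n)).mul_right _
    rw [← h, map_nsmul, smul_eq_mul, ceilDiv_le_iff_le_mul hΔ, mul_comm Δ]
    gcongr
  · simp

end HasDecay

theorem card_filter_degree_div_lt_le [Fintype W] {Δ : ℕ} (hΔ : 0 < Δ) (b : ℕ)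
    (s : Finset (W →₀ ℕ)) :
    (s.filter fun u => u.degree / Δ < b).card ≤ (Δ * b) ^ Fintype.card W := by
  classical
  have card_pi : (Fintype.piFinset fun _ : W => Finset.range (Δ * b)).card =
      (Δ * b) ^ Fintype.card W := by simp
  rw [← card_pi]
  refine Finset.card_le_card_of_injOn (fun u => ⇑u) (fun u hu => ?_) DFunLike.coe_injective.injOn
  have hlt := (Nat.div_lt_iff_lt_mul hΔ).mp (Finset.mem_filter.mp hu).2
  rw [mul_comm] at hlt
  simpa using fun w => (Finsupp.le_degree w u).trans_lt hlt

variable [DecidableEq W]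

/-- The matrix, on monomials dividing `X ^ B`, of Dwork's operator `H ↦ ψ_q (G * H)`, where `ψ_q`
keeps the monomials `X ^ (q • u)` and replaces them by `X ^ u`. -/
noncomputable def dworkMatrix (q : ℕ) (G : MvPolynomial W R) (B : W →₀ ℕ) :
    Matrix (Finset.Iic B) (Finset.Iic B) R :=
  Matrix.of fun u' u => (monomial u.1 1 * G).coeff (q • u'.1)

theorem sum_coeff_monomial_mul_mul_coeff {q : ℕ} (hq : 0 < q) {B : W →₀ ℕ}
    {F : MvPolynomial W R} (hF : ∀ w, F.coeff (q • w) ≠ 0 → w ≤ B) (H : MvPolynomial W R)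
    (n : W →₀ ℕ) :
    ∑ w ∈ Finset.Iic B, (monomial w 1 * H).coeff n * F.coeff (q • w) =
      (F * expand q H).coeff (q • n) := by
  induction H using MvPolynomial.induction_on' with
  | add P Q hP hQ =>
    simp only [mul_add, MvPolynomial.coeff_add, add_mul, Finset.sum_add_distrib, hP, hQ, map_add]
  | monomial b r =>
    simp only [MvPolynomial.expand_monomial, MvPolynomial.coeff_mul_monomial',
      MvPolynomial.monomial_mul, one_mul, MvPolynomial.coeff_monomial, ite_mul, zero_mul]
    by_cases hb : b ≤ n
    · obtain ⟨c, rfl⟩ := exists_add_of_le hb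
      simp only [add_comm b c, add_left_inj, Finset.sum_ite_eq', Finset.mem_Iic, smul_add,
        le_add_iff_nonneg_left, zero_le, if_true, add_tsub_cancel_right, mul_comm r]
      split_ifs with hc
      · rfl
      · rw [not_imp_comm.mp (hF c) hc, zero_mul]
    · have not_le : ¬ q • b ≤ q • n := fun h => hb fun w =>
        Nat.le_of_mul_le_mul_left (h w) hq
      rw [if_neg not_le]
      exact Finset.sum_eq_zero fun w _ => if_neg fun h => hb (le_add_self.trans_eq h)

theorem dworkMatrix_pow_apply {q : ℕ} (hq : 0 < q) {G : MvPolynomial W R} {B : W →₀ ℕ}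
    (hB : ∀ a ∈ G.support, a + B ≤ q • B) (m : ℕ) (u' u : Finset.Iic B) :
    (dworkMatrix q G B ^ m) u' u = (monomial u.1 1 * frobProd q G m).coeff (q ^ m • u'.1) := by
  induction m generalizing u with
  | zero =>
    rw [frobProd, Finset.prod_range_zero, mul_one, pow_zero, pow_zero, one_smul,
      MvPolynomial.coeff_monomial, Matrix.one_apply]
    exact if_congr (by rw [Subtype.ext_iff, eq_comm]) rfl rfl
  | succ m ih =>
    have le_of_coeff_ne_zero (w : W →₀ ℕ) (hw : (monomial u.1 1 * G).coeff (q • w) ≠ 0) :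
        w ≤ B := by
      rw [MvPolynomial.coeff_monomial_mul', one_mul, ite_ne_right_iff] at hw
      obtain ⟨hle, hw⟩ := hw
      have smul_le : q • w ≤ q • B :=
        calc q • w = q • w - u.1 + u.1 := (tsub_add_cancel_of_le hle).symm
          _ ≤ q • w - u.1 + B := by gcongr; exact Finset.mem_Iic.mp u.2
          _ ≤ q • B := hB _ (MvPolynomial.mem_support_iff.mpr hw)
      exact fun i => Nat.le_of_mul_le_mul_left (smul_le i) hq
    rw [pow_succ, Matrix.mul_apply, frobProd_succ, pow_succ', mul_smul, ← mul_assoc,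
      ← sum_coeff_monomial_mul_mul_coeff hq le_of_coeff_ne_zero]
    exact (Finset.sum_congr rfl fun w _ => by rw [ih]; rfl).trans (Finset.sum_coe_sort _ _)

/-- Conjugation by `diag (ϖ ^ D i)` turns the estimate on `A` into row-wise divisibility. -/
theorem exists_matrix_dvd_row_of_dvd [IsDomain R] {ϖ : R} (hϖ : ϖ ≠ 0) {ι : Type*} [Fintype ι]
    [DecidableEq ι] {A : Matrix ι ι R} {D : ι → ℕ}
    (hA : ∀ i j, ϖ ^ (2 * D i) ∣ A i j * ϖ ^ D j) :
    ∃ A' : Matrix ι ι R, (∀ i j, ϖ ^ D i ∣ A' i j) ∧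
      ∀ m i j, D i = D j → (A' ^ m) i j = (A ^ m) i j := by
  choose c hc using hA
  refine ⟨Matrix.of fun i j => ϖ ^ D i * c i j, fun i j => Dvd.intro _ rfl, fun m i j hij => ?_⟩
  set A' : Matrix ι ι R := Matrix.of fun i j => ϖ ^ D i * c i j
  have conj : SemiconjBy (Matrix.diagonal fun i => ϖ ^ D i) A' A := by
    ext i j
    rw [Matrix.diagonal_mul, Matrix.mul_diagonal, hc, two_mul, pow_add, mul_assoc]
    rfl
  have conj_pow := congrFun₂ (conj.pow_right m) i j
  rw [Matrix.diagonal_mul, Matrix.mul_diagonal, ← hij, mul_comm] at conj_pow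
  exact mul_right_cancel₀ (pow_ne_zero _ hϖ) conj_pow

theorem HasDecay.pow_dvd_dworkMatrix_mul_pow {ϖ : R} {Δ q : ℕ} (hΔ : 0 < Δ) (hq : 2 ≤ q)
    {G : MvPolynomial W R} (hG : HasDecay ϖ Δ G) (B : W →₀ ℕ) (u' u : Finset.Iic B) :
    ϖ ^ (2 * (u'.1.degree / Δ)) ∣ dworkMatrix q G B u' u * ϖ ^ (u.1.degree / Δ) := by
  rw [dworkMatrix, Matrix.of_apply, MvPolynomial.coeff_monomial_mul', one_mul]
  split_ifs with h
  · obtain ⟨a, ha⟩ := exists_add_of_le h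
    rw [ha, add_tsub_cancel_left]
    refine (pow_dvd_pow ϖ ?_).trans ((pow_add ϖ _ _).symm ▸ mul_dvd_mul_right (hG a) _)
    have degree_eq := congrArg Finsupp.degree ha
    rw [map_nsmul, map_add, smul_eq_mul] at degree_eq
    have h₁ := Nat.div_mul_le_self u'.1.degree Δ
    have h₂ := Nat.lt_mul_div_succ u.1.degree hΔ
    have h₃ : a.degree ≤ Δ * (a.degree ⌈/⌉ Δ) := le_smul_ceilDiv hΔ
    refine Nat.lt_succ_iff.mp (Nat.lt_of_mul_lt_mul_left (a := Δ) ?_)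
    nlinarith
  · simp

theorem equivMapDomain_mem_Iic {σ : Equiv.Perm W} {B : W →₀ ℕ} (hσ : B.equivMapDomain σ = B)
    {u : W →₀ ℕ} (hu : u ∈ Finset.Iic B) : u.equivMapDomain σ ∈ Finset.Iic B := by
  rw [Finset.mem_Iic] at hu ⊢
  rw [← hσ]
  exact fun w => hu (σ.symm w)

/-- Dwork's trace formula, the permutation `σ` of the variables twisting the trace. -/
theorem HasDecay.isCompactTrace [Fintype W] [IsDomain R] {ϖ : R} (hϖ : ϖ ≠ 0) {Δ q : ℕ}
    (hΔ : 0 < Δ) (hq : 2 ≤ q) {G : MvPolynomial W R} (hG : HasDecay ϖ Δ G) {B : W →₀ ℕ}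
    (hB : ∀ a ∈ G.support, a + B ≤ q • B) {σ : Equiv.Perm W} (hσ : B.equivMapDomain σ = B)
    (Z : (W →₀ ℕ) → Prop) [DecidablePred Z] (b : ℕ) :
    IsCompactTrace.{u} (ϖ ^ b) ((Δ * b) ^ Fintype.card W) fun m =>
      ∑ u ∈ Finset.Iic B with Z u, (monomial u 1 * frobProd q G (m + 1)).coeff
        (q ^ (m + 1) • u.equivMapDomain σ) := by
  obtain ⟨A, hA, hpow⟩ :=
    exists_matrix_dvd_row_of_dvd hϖ (hG.pow_dvd_dworkMatrix_mul_pow hΔ hq B)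
  let S : Matrix (Finset.Iic B) (Finset.Iic B) R :=
    Matrix.of fun u u' => if Z u ∧ u'.1 = u.1.equivMapDomain σ then 1 else 0
  have S_mul_apply (M : Matrix (Finset.Iic B) (Finset.Iic B) R) (u : Finset.Iic B) :
      (S * M) u u = if Z u then M ⟨_, equivMapDomain_mem_Iic hσ u.2⟩ u else 0 := by
    rw [Matrix.mul_apply, Finset.sum_eq_single ⟨_, equivMapDomain_mem_Iic hσ u.2⟩]
    · simp [S]
    · intro u' _ hu'
      simp [S, Subtype.ext_iff.not.mp hu']
    · simp
  refine ⟨Finset.Iic B, inferInstance, inferInstance, S, A,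
    Finset.univ.filter fun u => u.1.degree / Δ < b, ?_, fun u hu u' => ?_, fun m => ?_⟩
  · refine le_trans ?_ (card_filter_degree_div_lt_le hΔ b (Finset.Iic B))
    refine Finset.card_le_card_of_injOn Subtype.val (fun u hu => ?_) Subtype.val_injective.injOn
    exact Finset.mem_filter.mpr ⟨u.2, (Finset.mem_filter.mp hu).2⟩
  · exact (pow_dvd_pow ϖ (by simpa using hu)).trans (hA u u')
  · beta_reduce
    rw [Finset.sum_filter, ← Finset.sum_coe_sort, Matrix.trace]
    refine Finset.sum_congr rfl fun u _ => ?_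
    rw [Matrix.diag_apply, S_mul_apply,
      hpow _ _ _ (by simp [Finsupp.equivMapDomain_eq_mapDomain]), dworkMatrix_pow_apply (by lia) hB]

end DworkMatrix

section FiniteSubfields

variable (p : ℕ) [Fact p.Prime] (k : Type*) [Field k]

open Classical in
/-- The finite set of fixed points of the `N`-th iterate of Frobenius in `k`, for `N ≠ 0`. If `k`
is algebraically closed, it is the subfield with `p ^ N` elements. -/
noncomputable def frobFixed (N : ℕ) : Finset k :=
  (Polynomial.X ^ p ^ N - Polynomial.X : k[X]).roots.toFinset

variable {p k}

theorem mem_frobFixed {N : ℕ} (hN : N ≠ 0) {x : k} : x ∈ frobFixed p k N ↔ x ^ p ^ N = x := by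
  have hp : 1 < p := (Fact.out : p.Prime).one_lt
  simp [frobFixed, FiniteField.X_pow_card_pow_sub_X_ne_zero k hN hp, sub_eq_zero]

variable [CharP k p]

theorem card_frobFixed [IsAlgClosed k] {N : ℕ} (hN : N ≠ 0) :
    (frobFixed p k N).card = p ^ N := by
  classical
  have hp : 1 < p := (Fact.out : p.Prime).one_lt
  have separable := galois_poly_separable (K := k) p (p ^ N) (dvd_pow_self p hN)
  rw [frobFixed, Multiset.toFinset_card_of_nodup (Polynomial.nodup_roots separable),
    ← (IsAlgClosed.splits _).natDegree_eq_card_roots,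
    FiniteField.X_pow_card_pow_sub_X_natDegree_eq k hN hp]

theorem exists_subfield_coe_eq_frobFixed {N : ℕ} (hN : N ≠ 0) :
    ∃ F : Subfield k, (F : Set k) = frobFixed p k N :=
  ⟨(iterateFrobenius k p N).eqLocusField (RingHom.id k), Set.ext fun _ => (mem_frobFixed hN).symm⟩

variable {R : Type*} [CommRing R]

theorem exists_addChar_isPrimitive {ζ : R} (hζ : IsPrimitiveRoot ζ p) {F : Type*} [Field F]
    [Fintype F] [CharP F p] {N : ℕ} (hN : Fintype.card F = p ^ N) :
    ∃ χ : AddChar F R, χ.IsPrimitive ∧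
      ∀ x, ∃ a : ℕ, (a : F) = ∑ j ∈ Finset.range N, x ^ p ^ j ∧ χ x = ζ ^ a := by
  let _ : Algebra (ZMod p) F := ZMod.algebra F p
  have finrank_eq : Module.finrank (ZMod p) F = N := by
    have := Module.card_eq_pow_finrank (K := ZMod p) (V := F)
    rw [hN, ZMod.card] at this
    exact (Nat.pow_right_injective (Fact.out : p.Prime).two_le this).symm
  refine ⟨(AddChar.zmodChar p hζ.pow_eq_one).compAddMonoidHom
    (Algebra.trace (ZMod p) F).toAddMonoidHom, ?_, fun x => ?_⟩
  · obtain ⟨x, hx⟩ := Algebra.trace_surjective (ZMod p) F 1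
    refine .of_ne_one (AddChar.ne_one_iff.mpr ⟨x, fun h => one_ne_zero (α := ZMod p) ?_⟩)
    rw [← hx]
    exact ((AddChar.zmodChar_primitive_of_primitive_root p hζ).zmod_char_eq_one_iff _ _).mp h
  · refine ⟨(Algebra.trace (ZMod p) F x).val, ?_, AddChar.zmodChar_apply hζ.pow_eq_one _⟩
    have := FiniteField.algebraMap_trace_eq_sum_pow (ZMod p) F x
    rwa [finrank_eq, Nat.card_zmod, ← ZMod.natCast_zmod_val (Algebra.trace (ZMod p) F x),
      map_natCast] at this

variable [IsDomain R]

theorem sum_map_pow {F : Type*} [Field F] [Fintype F] {T : F →*₀ R} (hT : Function.Injective T)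
    (E : ℕ) : ∑ x, T x ^ E = (if E = 0 then 1 else 0) +
      if Fintype.card F - 1 ∣ E then (Fintype.card F : R) - 1 else 0 := by
  classical
  let φ : Fˣ →* R := ((T : F →* R).comp (Units.coeHom F)) ^ E
  have φ_eq_one_iff : φ = 1 ↔ Fintype.card F - 1 ∣ E := by
    rw [← FiniteField.forall_pow_eq_one_iff, MonoidHom.ext_iff]
    refine forall_congr' fun x => ?_
    rw [← Units.val_inj]
    exact (by simp [φ] : φ x = T ((x ^ E : Fˣ) : F)) ▸ hT.eq_iff' (map_one T)
  have sum_units : ∑ x : {x : F // x ≠ 0}, T x ^ E = ∑ x, φ x :=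
    (Equiv.sum_comp unitsEquivNeZero fun x : {x : F // x ≠ 0} => T x ^ E).symm
  rw [Fintype.sum_eq_add_sum_subtype_ne _ (0 : F), sum_units, sum_hom_units, map_zero, zero_pow_eq,
    Fintype.card_units, Nat.cast_ite, Nat.cast_sub Fintype.card_pos, Nat.cast_one, Nat.cast_zero]
  simp only [φ_eq_one_iff]

theorem sum_frobFixed_map_pow [IsAlgClosed k] {T : k →*₀ R} (hT : Function.Injective T) {N : ℕ}
    (hN : N ≠ 0) (E : ℕ) : ∑ x ∈ frobFixed p k N, T x ^ E =
      (if E = 0 then 1 else 0) + if p ^ N - 1 ∣ E then (p : R) ^ N - 1 else 0 := by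
  obtain ⟨F, hF⟩ := exists_subfield_coe_eq_frobFixed (p := p) (k := k) hN
  have mem_F (x : k) : x ∈ frobFixed p k N ↔ x ∈ F := (Set.ext_iff.mp hF x).symm
  let _ : Fintype F := Fintype.subtype _ mem_F
  have card_F : Fintype.card F = p ^ N :=
    (Fintype.card_of_subtype _ mem_F).trans (card_frobFixed hN)
  rw [Finset.sum_subtype _ mem_F, ← Nat.cast_pow, ← card_F]
  exact sum_map_pow (T := T.comp F.subtype.toMonoidWithZeroHom) (hT.comp F.subtype_injective) E

variable (p) in
/-- On the subfield with `p ^ N` elements the character is `ζ` raised to the absolute trace; its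
values elsewhere on `k` are irrelevant. -/
def IsTraceChar (ζ : R) (N : ℕ) (ψ : AddChar k R) : Prop :=
  ∀ x ∈ frobFixed p k N, ∃ a : ℕ, (a : k) = ∑ j ∈ Finset.range N, x ^ p ^ j ∧ ψ x = ζ ^ a

theorem exists_isTraceChar [IsAlgClosed k] {ζ : R} (hζ : IsPrimitiveRoot ζ p) {N : ℕ}
    (hN : N ≠ 0) : ∃ ψ : AddChar k R, IsTraceChar p ζ N ψ ∧
      ∀ w ∈ frobFixed p k N, w ≠ 0 → ∑ y ∈ frobFixed p k N, ψ (y * w) = 0 := by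
  classical
  obtain ⟨F, hF⟩ := exists_subfield_coe_eq_frobFixed (p := p) (k := k) hN
  have mem_F (x : k) : x ∈ frobFixed p k N ↔ x ∈ F := (Set.ext_iff.mp hF x).symm
  let _ : Fintype F := Fintype.subtype _ mem_F
  obtain ⟨χ, χ_primitive, hχ⟩ := exists_addChar_isPrimitive hζ (F := F)
    ((Fintype.card_of_subtype _ mem_F).trans (card_frobFixed hN))
  let _ : Algebra (ZMod p) k := ZMod.algebra k p
  let _ : Algebra (ZMod p) F := ZMod.algebra F p
  obtain ⟨proj, hproj⟩ := LinearMap.exists_leftInverse_of_injective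
    (F.subtype.toAddMonoidHom.toZModLinearMap p) (LinearMap.ker_eq_bot.mpr F.subtype_injective)
  let ψ := χ.compAddMonoidHom proj.toAddMonoidHom
  have ψ_coe (x : F) : ψ x = χ x := congrArg χ (LinearMap.congr_fun hproj x)
  refine ⟨ψ, fun x hx => ?_, fun w hw w_ne => ?_⟩
  · lift x to F using (mem_F x).mp hx
    obtain ⟨a, ha, hχa⟩ := hχ x
    exact ⟨a, by simpa using congrArg F.subtype ha, (ψ_coe x).trans hχa⟩
  · lift w to F using (mem_F w).mp hw
    calc ∑ y ∈ frobFixed p k N, ψ (y * w) = ∑ y : F, ψ (y * w) := Finset.sum_subtype _ mem_F _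
      _ = ∑ y : F, χ (y * w) := by simp only [← F.coe_mul, ψ_coe]
      _ = 0 := by
        rw [AddChar.sum_mulShift w χ_primitive, if_neg (by simpa using w_ne), Nat.cast_zero]

end FiniteSubfields

section CyclicDigits

variable {d : ℕ} {Q : ℕ} {u w : ZMod d → ℕ}

/-- The number whose base `Q` digits are the values of `w` along the cycle `ZMod d`, read from
position `j`. -/
def cyclicDigitSum (Q : ℕ) (w : ZMod d → ℕ) (j : ZMod d) : ℕ :=
  ∑ i ∈ Finset.range d, w (j + i) * Q ^ i

theorem sum_range_mul_pow_add_eq (h : ∀ j, u j + w j = Q * u (j + 1)) (n : ℕ) (j : ZMod d) :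
    ∑ i ∈ Finset.range n, w (j + i) * Q ^ i + u j = Q ^ n * u (j + n) := by
  induction n with
  | zero => simp
  | succ n ih =>
    rw [Finset.sum_range_succ, add_right_comm, ih, Nat.cast_succ, ← add_assoc, pow_succ, mul_assoc,
      ← h]
    ring

theorem cyclicDigitSum_add_le (h : ∀ j, w j + u j ≤ Q * u (j + 1)) (j : ZMod d) :
    cyclicDigitSum Q w j + u j ≤ Q ^ d * u j := by
  have telescope := sum_range_mul_pow_add_eq (w := fun j => Q * u (j + 1) - u j) (u := u) (Q := Q)
    (fun j => Nat.add_sub_of_le (le_of_add_le_right (h j))) d j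
  rw [ZMod.natCast_self, add_zero] at telescope
  rw [← telescope, cyclicDigitSum]
  gcongr
  exact Nat.le_sub_of_add_le (h _)

theorem mul_cyclicDigitSum_add_one_add (Q : ℕ) (w : ZMod d → ℕ) (j : ZMod d) :
    Q * cyclicDigitSum Q w (j + 1) + w j = cyclicDigitSum Q w j + Q ^ d * w j := by
  have := (Finset.sum_range_succ' (fun i : ℕ => w (j + i) * Q ^ i) d).symm.trans
    (Finset.sum_range_succ (fun i : ℕ => w (j + i) * Q ^ i) d)
  simp only [Nat.cast_zero, add_zero, pow_zero, mul_one, ZMod.natCast_self] at this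
  rw [cyclicDigitSum, cyclicDigitSum, mul_comm (Q ^ d), ← this, Finset.mul_sum]
  congr! 2 with i
  rw [Nat.cast_succ, add_right_comm j, add_assoc j, pow_succ]
  ring_nf

variable [NeZero d]

theorem forall_add_eq_mul_shift_iff (hQ : 1 < Q) :
    (∀ j, u j + w j = Q * u (j + 1)) ↔ ∀ j, (Q ^ d - 1) * u j = cyclicDigitSum Q w j := by
  obtain ⟨c, hc⟩ : ∃ c, Q ^ d = c + 1 :=
    ⟨Q ^ d - 1, (Nat.sub_add_cancel (Nat.pow_pos (by lia))).symm⟩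
  have c_pos : 0 < c := by
    have := Nat.one_lt_pow (NeZero.ne d) hQ
    lia
  rw [hc, Nat.add_sub_cancel]
  refine ⟨fun h j => ?_, fun h j => Nat.eq_of_mul_eq_mul_left c_pos ?_⟩
  · have := sum_range_mul_pow_add_eq h d j
    rw [ZMod.natCast_self, add_zero, hc] at this
    rw [cyclicDigitSum]
    lia
  · have := mul_cyclicDigitSum_add_one_add Q w j
    rw [← h, ← h, hc] at this
    linarith

theorem dvd_cyclicDigitSum (hQ : 0 < Q) (h : Q ^ d - 1 ∣ cyclicDigitSum Q w 0) (j : ZMod d) :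
    Q ^ d - 1 ∣ cyclicDigitSum Q w j := by
  have dvd_of_dvd_succ (j : ZMod d) (hj : Q ^ d - 1 ∣ cyclicDigitSum Q w (j + 1)) :
      Q ^ d - 1 ∣ cyclicDigitSum Q w j := by
    have h₁ := mul_cyclicDigitSum_add_one_add Q w j
    have h₂ := Nat.sub_one_add_one (Nat.pow_pos (n := d) hQ).ne'
    have h₃ : Q * cyclicDigitSum Q w (j + 1) = cyclicDigitSum Q w j + (Q ^ d - 1) * w j := by
      nlinarith
    exact (Nat.dvd_add_left (dvd_mul_right _ _)).mp (h₃ ▸ hj.mul_left Q)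
  have dvd_neg (n : ℕ) : Q ^ d - 1 ∣ cyclicDigitSum Q w (-n) := by
    induction n with
    | zero => simpa using h
    | succ n ih => exact dvd_of_dvd_succ _ (by simpa using ih)
  simpa using dvd_neg (-j).val

theorem cyclicDigitSum_eq_zero_iff (hQ : 0 < Q) {j : ZMod d} :
    cyclicDigitSum Q w j = 0 ↔ w = 0 := by
  refine ⟨fun h => funext fun i => ?_, fun h => by simp [cyclicDigitSum, h]⟩
  have := Finset.sum_eq_zero_iff.mp h (i - j).val (Finset.mem_range.mpr (ZMod.val_lt _))
  simpa [hQ.ne'] using this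

theorem cyclicDigitSum_zero (Q : ℕ) (w : ZMod d → ℕ) :
    cyclicDigitSum Q w 0 = ∑ j, w j * Q ^ j.val :=
  Finset.sum_nbij' (fun i => (i : ZMod d)) ZMod.val (fun _ _ => Finset.mem_univ _)
    (fun _ _ => Finset.mem_range.mpr (ZMod.val_lt _))
    (fun _ h => ZMod.val_cast_of_lt (Finset.mem_range.mp h)) (fun _ _ => ZMod.natCast_zmod_val _)
    (fun i h => by rw [zero_add, ZMod.val_cast_of_lt (Finset.mem_range.mp h)])

end CyclicDigits

section TwistedTrace

open MvPolynomial (eval monomial)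

universe u

variable {V : Type u} (d : V → ℕ)

/-- The permutation `⟨v, j⟩ ↦ ⟨v, j - 1⟩` of the disjoint union of the cycles `ZMod (d v)`, under
which the exponent vector `u` is transported to `⟨v, j⟩ ↦ u ⟨v, j + 1⟩`. -/
def cyclicShift : Equiv.Perm (Σ v, ZMod (d v)) :=
  Equiv.sigmaCongrRight fun _ => Equiv.subRight 1

variable {d}

@[simp]
theorem equivMapDomain_cyclicShift_apply (u : (Σ v, ZMod (d v)) →₀ ℕ) (v : V) (j : ZMod (d v)) :
    u.equivMapDomain (cyclicShift d) ⟨v, j⟩ = u ⟨v, j + 1⟩ :=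
  rfl

variable [∀ v, NeZero (d v)] {Q : ℕ} {B w u : (Σ v, ZMod (d v)) →₀ ℕ}

theorem add_eq_smul_cyclicShift_iff (hQ : 1 < Q) :
    u + w = Q • u.equivMapDomain (cyclicShift d) ↔
      ∀ v j, (Q ^ d v - 1) * u ⟨v, j⟩ = cyclicDigitSum Q (fun i => w ⟨v, i⟩) j := by
  simp only [← forall_add_eq_mul_shift_iff hQ (u := fun i => u ⟨_, i⟩), DFunLike.ext_iff,
    Sigma.forall, Finsupp.add_apply, Finsupp.smul_apply, equivMapDomain_cyclicShift_apply,
    smul_eq_mul]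

theorem eq_of_add_eq_smul_cyclicShift (hQ : 1 < Q) {u' : (Σ v, ZMod (d v)) →₀ ℕ}
    (hu : u + w = Q • u.equivMapDomain (cyclicShift d))
    (hu' : u' + w = Q • u'.equivMapDomain (cyclicShift d)) : u = u' := by
  ext ⟨v, j⟩
  have hpos : 0 < Q ^ d v - 1 := Nat.sub_pos_of_lt (Nat.one_lt_pow (NeZero.ne _) hQ)
  rw [add_eq_smul_cyclicShift_iff hQ] at hu hu'
  exact Nat.eq_of_mul_eq_mul_left hpos ((hu v j).trans (hu' v j).symm)

variable [Fintype V] {R : Type*} [CommRing R]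

/-- The point of the `∑ v, d v`-dimensional space formed by the iterated `Q`-th powers of the
coordinates of `x`. -/
def frobOrbit (d : V → ℕ) (Q : ℕ) (x : V → R) (y : Σ v, ZMod (d v)) : R :=
  x y.1 ^ Q ^ y.2.val

theorem prod_frobOrbit_pow (x : V → R) (w : (Σ v, ZMod (d v)) →₀ ℕ) :
    ∏ y, frobOrbit d Q x y ^ w y = ∏ v, x v ^ cyclicDigitSum Q (fun j => w ⟨v, j⟩) 0 := by
  simp only [Fintype.prod_sigma, cyclicDigitSum_zero, frobOrbit, ← Finset.prod_pow_eq_pow_sum,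
    ← pow_mul, mul_comm (w _)]

variable [DecidableEq V]

theorem exists_add_eq_smul_cyclicShift_iff (hQ : 1 < Q)
    (hB : B.equivMapDomain (cyclicShift d) = B) (hw : w + B ≤ Q • B) (Z : Finset V) :
    (∃ u ≤ B, (∀ v ∈ Z, ∀ j, u ⟨v, j⟩ = 0) ∧ u + w = Q • u.equivMapDomain (cyclicShift d)) ↔
      (∀ v ∈ Z, cyclicDigitSum Q (fun j => w ⟨v, j⟩) 0 = 0) ∧
        ∀ v ∈ Zᶜ, Q ^ d v - 1 ∣ cyclicDigitSum Q (fun j => w ⟨v, j⟩) 0 := by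
  simp only [add_eq_smul_cyclicShift_iff hQ]
  constructor
  · rintro ⟨u, -, hZ, hu⟩
    exact ⟨fun v hv => by rw [← hu, hZ v hv, mul_zero], fun v _ => ⟨_, (hu v 0).symm⟩⟩
  · rintro ⟨hZ, hdvd⟩
    have w_eq_zero (v : V) (hv : v ∈ Z) : (fun j => w ⟨v, j⟩) = 0 :=
      (cyclicDigitSum_eq_zero_iff (by lia)).mp (hZ v hv)
    refine ⟨Finsupp.equivFunOnFinite.symm fun x =>
      cyclicDigitSum Q (fun j => w ⟨x.1, j⟩) x.2 / (Q ^ d x.1 - 1), ?_, ?_, ?_⟩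
    · rintro ⟨v, j⟩
      have hstep (i : ZMod (d v)) : w ⟨v, i⟩ + B ⟨v, i⟩ ≤ Q * B ⟨v, i + 1⟩ := by
        rw [← equivMapDomain_cyclicShift_apply, hB]
        exact hw ⟨v, i⟩
      have := cyclicDigitSum_add_le (w := fun i => w ⟨v, i⟩) (u := fun i => B ⟨v, i⟩) hstep j
      refine Nat.div_le_of_le_mul ?_
      rw [Nat.sub_mul, one_mul]
      exact Nat.le_sub_of_add_le this
    · intro v hv j
      have := (cyclicDigitSum_eq_zero_iff (Q := Q) (by lia) (j := j)).mpr (w_eq_zero v hv)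
      simp [this]
    · intro v j
      refine Nat.mul_div_cancel' (dvd_cyclicDigitSum (by lia) ?_ j)
      by_cases hv : v ∈ Z
      · rw [hZ v hv]
        exact dvd_zero _
      · exact hdvd v (Finset.mem_compl.mpr hv)

theorem sum_Iic_coeff_monomial_mul_cyclicShift (hQ : 1 < Q)
    (hB : B.equivMapDomain (cyclicShift d) = B) (Z : Finset V)
    {H : MvPolynomial (Σ v, ZMod (d v)) R} (hH : ∀ w ∈ H.support, w + B ≤ Q • B) :
    ∑ u ∈ Finset.Iic B with ∀ v ∈ Z, ∀ j, u ⟨v, j⟩ = 0,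
        (monomial u 1 * H).coeff (Q • u.equivMapDomain (cyclicShift d)) =
      ∑ w ∈ H.support, H.coeff w *
        ((∏ v ∈ Z, if cyclicDigitSum Q (fun j => w ⟨v, j⟩) 0 = 0 then 1 else 0) *
          ∏ v ∈ Zᶜ, if Q ^ d v - 1 ∣ cyclicDigitSum Q (fun j => w ⟨v, j⟩) 0 then 1 else 0) := by
  have coeff_eq (u v : (Σ v, ZMod (d v)) →₀ ℕ) : (monomial u 1 * H).coeff v =
      ∑ w ∈ H.support, H.coeff w * if u + w = v then 1 else 0 := by
    conv_lhs => rw [H.as_sum, Finset.mul_sum, MvPolynomial.coeff_sum]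
    simp [MvPolynomial.monomial_mul, MvPolynomial.coeff_monomial]
  simp only [coeff_eq]
  rw [Finset.sum_comm]
  refine Finset.sum_congr rfl fun w hw => ?_
  rw [← Finset.mul_sum, Finset.prod_boole, Finset.prod_boole, ite_zero_mul_ite_zero, one_mul]
  congr 1
  split_ifs with h <;> rw [← exists_add_eq_smul_cyclicShift_iff hQ hB (hH w hw) Z] at h
  · obtain ⟨u, hu, huZ, hueq⟩ := h
    rw [Finset.sum_eq_single_of_mem u (Finset.mem_filter.mpr ⟨Finset.mem_Iic.mpr hu, huZ⟩),
      if_pos hueq]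
    exact fun u' _ hne => if_neg fun h => hne (eq_of_add_eq_smul_cyclicShift hQ h hueq)
  · refine Finset.sum_eq_zero fun u hu => if_neg fun hueq => h ⟨u, ?_⟩
    simpa [hueq] using hu

/-- Dwork's trace formula for a Frobenius vector: summing over points with coordinates in different
subfields replaces the diagonal coefficients by those twisted by the cyclic shift. -/
theorem sum_eval_frobOrbit (hQ : 1 < Q) (hB : B.equivMapDomain (cyclicShift d) = B)
    {H : MvPolynomial (Σ v, ZMod (d v)) R} (hH : ∀ w ∈ H.support, w + B ≤ Q • B)
    {α : Type*} {s : V → Finset α} {T : α → R}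
    (hs : ∀ v E, ∑ x ∈ s v, T x ^ E =
      (if E = 0 then 1 else 0) + if Q ^ d v - 1 ∣ E then (Q : R) ^ d v - 1 else 0) :
    ∑ x ∈ Fintype.piFinset s, eval (frobOrbit d Q (T ∘ x)) H =
      ∑ Z : Finset V, (∏ v ∈ Zᶜ, ((Q : R) ^ d v - 1)) *
        ∑ u ∈ Finset.Iic B with ∀ v ∈ Z, ∀ j, u ⟨v, j⟩ = 0,
          (monomial u 1 * H).coeff (Q • u.equivMapDomain (cyclicShift d)) := by
  simp only [sum_Iic_coeff_monomial_mul_cyclicShift hQ hB _ hH, MvPolynomial.eval_eq',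
    prod_frobOrbit_pow, Function.comp_apply, Finset.mul_sum]
  rw [Finset.sum_comm, Finset.sum_comm (γ := Finset V)]
  refine Finset.sum_congr rfl fun w _ => ?_
  rw [← Finset.mul_sum, ← Finset.prod_univ_sum s fun v z =>
    T z ^ cyclicDigitSum Q (fun j => w ⟨v, j⟩) 0]
  simp only [hs]
  rw [Fintype.prod_add, Finset.mul_sum]
  refine Finset.sum_congr rfl fun Z _ => ?_
  rw [mul_left_comm (∏ v ∈ Zᶜ, _), mul_left_comm (∏ v ∈ Zᶜ, _), ← Finset.prod_mul_distrib]
  simp only [mul_ite, mul_one, mul_zero]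

theorem HasDecay.isCompactTrace_sum_eval_frobOrbit [IsDomain R] {ϖ : R} (hϖ : ϖ ≠ 0) {Δ q : ℕ}
    (hΔ : 0 < Δ) (hq : 2 ≤ q) {G : MvPolynomial (Σ v, ZMod (d v)) R} (hG : HasDecay ϖ Δ G)
    {α : Type*} {s : ℕ → V → Finset α} {T : α → R}
    (hs : ∀ m v E, ∑ x ∈ s m v, T x ^ E = (if E = 0 then 1 else 0) +
      if (q ^ (m + 1)) ^ d v - 1 ∣ E then ((q ^ (m + 1) : ℕ) : R) ^ d v - 1 else 0) (b : ℕ) :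
    IsCompactTrace.{u} (ϖ ^ b)
      (∑ Z : Finset V, 2 ^ Zᶜ.card * (Δ * b) ^ Fintype.card (Σ v, ZMod (d v))) fun m =>
      ∑ x ∈ Fintype.piFinset (s m),
        eval (frobOrbit d (q ^ (m + 1)) (T ∘ x)) (frobProd q G (m + 1)) := by
  set B : (Σ v, ZMod (d v)) →₀ ℕ := Finsupp.equivFunOnFinite.symm fun _ => G.totalDegree
  have B_bound : ∀ a ∈ G.support, a + B ≤ q • B := fun a ha y => by
    have : a y ≤ G.totalDegree := (Finsupp.le_degree y a).trans (MvPolynomial.le_totalDegree ha)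
    calc a y + G.totalDegree ≤ 2 * G.totalDegree := by lia
      _ ≤ q * G.totalDegree := Nat.mul_le_mul_right _ hq
  have B_shift : B.equivMapDomain (cyclicShift d) = B := by ext; rfl
  convert IsCompactTrace.sum fun (Z : Finset V) (_ : Z ∈ Finset.univ) =>
    (hG.isCompactTrace hϖ hΔ hq B_bound B_shift (fun u => ∀ v ∈ Z, ∀ j, u ⟨v, j⟩ = 0)
      b).prod_pow_sub_one_mul Zᶜ fun v => (q : R) ^ d v using 2 with m
  rw [sum_eval_frobOrbit (Nat.one_lt_pow m.succ_ne_zero hq) B_shift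
    (fun w hw => add_le_of_mem_support_frobProd (by lia) B_bound hw) (hs m)]
  simp only [Finset.sum_apply, Nat.cast_pow, pow_right_comm _ (d _)]

end TwistedTrace

section DworkSplitting

open MvPolynomial (eval monomial)

theorem prod_range_mul {M : Type*} [CommMonoid M] (f : ℕ → M) (a b : ℕ) :
    ∏ j ∈ Finset.range (a * b), f j =
      ∏ i ∈ Finset.range b, ∏ j ∈ Finset.range a, f (a * i + j) := by
  induction b with
  | zero => simp
  | succ b ih => rw [mul_add_one, Finset.prod_range_add, ih, Finset.prod_range_succ]

theorem pow_pow_mod {M : Type*} [Monoid M] {x : M} {Q n : ℕ} (h : x ^ Q ^ n = x) (l : ℕ) :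
    x ^ Q ^ (l % n) = x ^ Q ^ l := by
  have periodic : Function.IsPeriodicPt (fun y : M => y ^ Q) n x := by
    rwa [Function.IsPeriodicPt, Function.IsFixedPt, pow_iterate]
  simpa only [pow_iterate] using periodic.iterate_mod_apply l

theorem pow_pow_mul {M : Type*} [Monoid M] {x : M} {Q n : ℕ} (h : x ^ Q ^ n = x) (l : ℕ) :
    x ^ Q ^ (n * l) = x := by
  rw [← pow_pow_mod h, Nat.mul_mod_right, pow_zero, pow_one]

variable {R : Type*} [CommRing R]

theorem eval_frobProd {W : Type*} (q : ℕ) (G : MvPolynomial W R) (m : ℕ) (y : W → R) :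
    eval y (frobProd q G m) = ∏ i ∈ Finset.range m, eval (y ^ q ^ i) G := by
  simp only [frobProd, map_prod, MvPolynomial.eval_expand]

theorem frobOrbit_natCast {Q : ℕ} {V : Type*} {d : V → ℕ} {x : V → R}
    (hx : ∀ v, x v ^ Q ^ d v = x v) (v : V) (l : ℕ) :
    frobOrbit d Q x ⟨v, l⟩ = x v ^ Q ^ l := by
  rw [frobOrbit, ZMod.val_natCast, pow_pow_mod (hx v)]

variable {V : Type*} [Fintype V] (d : V → ℕ) [∀ v, NeZero (d v)]

/-- The exponent vector `t` placed at the positions `⟨v, l⟩`. -/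
noncomputable def layerExponent (l : ℕ) (t : V →₀ ℕ) : (Σ v, ZMod (d v)) →₀ ℕ :=
  Finsupp.equivFunOnFinite.symm fun y => if y.2 = l then t y.1 else 0

variable {d}

theorem degree_layerExponent (l : ℕ) (t : V →₀ ℕ) : (layerExponent d l t).degree = t.degree := by
  rw [Finsupp.degree_eq_sum, Finsupp.degree_eq_sum, Fintype.sum_sigma]
  refine Finset.sum_congr rfl fun v _ => ?_
  rw [Fintype.sum_eq_single (l : ZMod (d v)) fun j hj => by simp [layerExponent, hj]]
  simp [layerExponent]

theorem eval_monomial_layerExponent (y : (Σ v, ZMod (d v)) → R) (l n : ℕ) (t : V →₀ ℕ) (c : R) :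
    eval y (monomial (n • layerExponent d l t) (c ^ n)) = (c * ∏ v, y ⟨v, l⟩ ^ t v) ^ n := by
  have prod_layer (v : V) :
      ∏ j, y ⟨v, j⟩ ^ (n • layerExponent d l t) ⟨v, j⟩ = (y ⟨v, l⟩ ^ t v) ^ n := by
    rw [Fintype.prod_eq_single (l : ZMod (d v)) fun j hj => by simp [layerExponent, hj]]
    simp [layerExponent, ← pow_mul, mul_comm]
  rw [MvPolynomial.eval_monomial, Finsupp.prod_fintype _ _ fun _ => pow_zero _,
    Fintype.prod_sigma, mul_pow, ← Finset.prod_pow]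
  simp only [prod_layer]

variable (d) in
/-- Dwork's product of splitting functions for a polynomial with exponents in `S` and lifted
coefficients `c`. The Frobenius powers `l < D` are spread over the layers of the enlarged set of
variables, so that the twisted trace formula applies. -/
noncomputable def dworkSplitting (p e D : ℕ) (S : Finset (V →₀ ℕ)) (c : (V →₀ ℕ) → R) (θ : R[X]) :
    MvPolynomial (Σ v, ZMod (d v)) R :=
  ∏ l ∈ Finset.range D, ∏ t ∈ S, ∏ i ∈ Finset.range e,
    Polynomial.aeval (monomial (p ^ i • layerExponent d l t) (c t ^ p ^ i)) θ

variable {p e D : ℕ} {S : Finset (V →₀ ℕ)} {c : (V →₀ ℕ) → R} {θ : R[X]}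

theorem hasDecay_dworkSplitting {ϖ : R} {Δ : ℕ} (hΔ : 0 < Δ) (hp : 0 < p)
    (hS : ∀ t ∈ S, p ^ e * t.degree ≤ Δ) (hθ : ∀ n, ϖ ^ n ∣ θ.coeff n) :
    HasDecay ϖ Δ (dworkSplitting d p e D S c θ) := by
  refine .prod hΔ fun l _ => .prod hΔ fun t ht => .prod hΔ fun i hi => .aeval_monomial hΔ hθ ?_ _
  rw [map_nsmul, degree_layerExponent, smul_eq_mul]
  exact (Nat.mul_le_mul_right _ (Nat.pow_le_pow_right hp (Finset.mem_range.mp hi).le)).trans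
    (hS t ht)

theorem eval_frobProd_dworkSplitting (hc : ∀ t ∈ S, c t ^ p ^ e = c t) {m : ℕ} {x : V → R}
    (hx : ∀ v, x v ^ p ^ (e * m * d v) = x v) :
    eval (frobOrbit d ((p ^ e) ^ m) x) (frobProd (p ^ e) (dworkSplitting d p e D S c θ) m) =
      ∏ t ∈ S, ∏ j ∈ Finset.range (e * m * D), θ.eval ((c t * ∏ v, x v ^ t v) ^ p ^ j) := by
  have hx' (v : V) : x v ^ ((p ^ e) ^ m) ^ d v = x v := by rw [← pow_mul p, ← pow_mul p, hx]
  have eval_monomial (j l i : ℕ) (t : V →₀ ℕ) (ht : t ∈ S) :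
      eval (frobOrbit d ((p ^ e) ^ m) x ^ (p ^ e) ^ j)
          (monomial (p ^ i • layerExponent d l t) (c t ^ p ^ i)) =
        (c t * ∏ v, x v ^ t v) ^ p ^ (e * m * l + (e * j + i)) := by
    have c_fixed : c t ^ p ^ (e * m * l + e * j) = c t := by
      rw [mul_assoc, ← mul_add]
      exact pow_pow_mul (hc t ht) _
    rw [eval_monomial_layerExponent, ← add_assoc, pow_add, pow_mul, mul_pow _ _ (p ^ (_ + _)),
      c_fixed, ← Finset.prod_pow]
    simp only [Pi.pow_apply, frobOrbit_natCast hx']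
    simp only [← pow_mul]
    congr! 4
    ring
  have eval_aeval (y : (Σ v, ZMod (d v)) → R) (P : MvPolynomial (Σ v, ZMod (d v)) R) :
      eval y (Polynomial.aeval P θ) = θ.eval (eval y P) := by
    simpa [Polynomial.aeval_def, Polynomial.eval₂_eq_eval_map] using
      (Polynomial.aeval_algHom_apply (MvPolynomial.aeval (R := R) y) P θ).symm
  rw [eval_frobProd]
  simp only [dworkSplitting, map_prod, eval_aeval]
  rw [Finset.prod_congr rfl fun j _ => Finset.prod_comm, Finset.prod_comm]
  refine Finset.prod_congr rfl fun t ht => ?_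
  simp only [eval_monomial _ _ _ t ht]
  rw [Finset.prod_comm, prod_range_mul _ (e * m)]
  refine Finset.prod_congr rfl fun l _ => ?_
  rw [prod_range_mul _ e m]

end DworkSplitting

section ExponentialSums

universe u v

open MvPolynomial (eval)

theorem dvd_prod_sub_prod {R α : Type*} [CommRing R] {x : R} {s : Finset α} {a b : α → R}
    (h : ∀ i ∈ s, x ∣ a i - b i) : x ∣ ∏ i ∈ s, a i - ∏ i ∈ s, b i := by
  simp only [← Ideal.mem_span_singleton, ← Ideal.Quotient.mk_eq_mk_iff_sub_mem] at h ⊢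
  rw [map_prod, map_prod]
  exact Finset.prod_congr rfl h

theorem addChar_map_sum {A M α : Type*} [AddCommMonoid A] [CommMonoid M] (ψ : AddChar A M)
    (s : Finset α) (f : α → A) : ψ (∑ i ∈ s, f i) = ∏ i ∈ s, ψ (f i) :=
  map_prod ψ.toMonoidHom (fun i => Multiplicative.ofAdd (f i)) s

variable {p : ℕ} [Fact p.Prime] {k : Type*} [Field k]
variable {V : Type u} [Fintype V] {d : V → ℕ} {e D : ℕ} {g : MvPolynomial V k}
variable {R : Type v} [CommRing R] {ζ : R}

theorem dvd_eval_sub_addChar_eval [∀ v, NeZero (d v)] {T : k →*₀ R} {K : ℕ} {θ : R[X]}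
    (hθ : ∀ (x : k) (f a : ℕ), x ^ p ^ f = x → (a : k) = ∑ j ∈ Finset.range f, x ^ p ^ j →
      (ζ - 1) ^ K ∣ ∏ j ∈ Finset.range f, θ.eval (T x ^ p ^ j) - ζ ^ a)
    (hg : ∀ t, g.coeff t ^ p ^ e = g.coeff t) (hD : ∀ v, d v ∣ D) {m : ℕ} (hm : e * m * D ≠ 0)
    {ψ : AddChar k R} (hψ : IsTraceChar p ζ (e * m * D) ψ) {x : V → k}
    (hx : ∀ v, x v ^ p ^ (e * m * d v) = x v) :
    (ζ - 1) ^ K ∣ eval (frobOrbit d ((p ^ e) ^ m) (T ∘ x))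
      (frobProd (p ^ e) (dworkSplitting d p e D g.support (T ∘ g.coeff) θ) m) - ψ (eval x g) := by
  have x_fixed (v : V) : x v ^ p ^ (e * m * D) = x v := by
    obtain ⟨l, rfl⟩ := hD v
    rw [← mul_assoc]
    exact pow_pow_mul (hx v) l
  have term_fixed (t : V →₀ ℕ) :
      (g.coeff t * ∏ v, x v ^ t v) ^ p ^ (e * m * D) = g.coeff t * ∏ v, x v ^ t v := by
    rw [mul_pow, mul_assoc e, pow_pow_mul (hg t), ← Finset.prod_pow, ← mul_assoc]
    simp only [pow_right_comm _ (_ : ℕ) (p ^ _), x_fixed]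
  have eval_eq : eval (frobOrbit d ((p ^ e) ^ m) (T ∘ x))
      (frobProd (p ^ e) (dworkSplitting d p e D g.support (T ∘ g.coeff) θ) m) =
      ∏ t ∈ g.support, ∏ j ∈ Finset.range (e * m * D),
        θ.eval (T (g.coeff t * ∏ v, x v ^ t v) ^ p ^ j) := by
    rw [eval_frobProd_dworkSplitting (fun t _ => by simp [← map_pow, hg])
      fun v => by simp [← map_pow, hx]]
    simp only [Function.comp_apply, map_mul, map_prod, map_pow]
  rw [eval_eq, MvPolynomial.eval_eq', addChar_map_sum]
  refine dvd_prod_sub_prod fun t _ => ?_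
  obtain ⟨a, ha, hψa⟩ := hψ _ ((mem_frobFixed hm).mpr (term_fixed t))
  rw [hψa]
  exact hθ _ _ a (term_fixed t) ha

variable [CharP k p] [DecidableEq V] [IsAlgClosed k] [IsDomain R]
variable [Algebra (WittVector p k) R] [FaithfulSMul (WittVector p k) R]

theorem hasCompactTrace_sum_addChar_eval (hζ : IsPrimitiveRoot ζ p) (hpR : (p : R) ≠ 0)
    (he : e ≠ 0) (hD₀ : D ≠ 0) (hD : ∀ v, d v ∣ D) (hg : ∀ t, g.coeff t ^ p ^ e = g.coeff t)
    {ψ : ℕ → AddChar k R} (hψ : ∀ m, IsTraceChar p ζ (e * (m + 1) * D) (ψ m)) :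
    HasCompactTrace.{u} (ζ - 1) fun m =>
      ∑ x ∈ Fintype.piFinset fun v => frobFixed p k (e * (m + 1) * d v), ψ m (eval x g) := by
  have hp : p.Prime := Fact.out
  have (v : V) : NeZero (d v) := ⟨ne_zero_of_dvd_ne_zero hD₀ (hD v)⟩
  set Δ := p ^ e * g.totalDegree + 1
  intro b
  refine ⟨∑ Z : Finset V, 2 ^ Zᶜ.card * (Δ * b) ^ Fintype.card (Σ v, ZMod (d v)), fun K => ?_⟩
  obtain ⟨θ, θ_coeff, hθ⟩ := exists_dwork_splitting k hζ hpR K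
  set T := teichmuller R p k
  set G := dworkSplitting d p e D g.support (T ∘ g.coeff) θ
  have G_decay : HasDecay (ζ - 1) Δ G :=
    hasDecay_dworkSplitting (Nat.succ_pos _) hp.pos
      (fun t ht => Nat.le_succ_of_le (Nat.mul_le_mul_left _ (MvPolynomial.le_totalDegree ht)))
      θ_coeff
  refine ⟨_, G_decay.isCompactTrace_sum_eval_frobOrbit (T := T)
    (s := fun m v => frobFixed p k (e * (m + 1) * d v)) (sub_ne_zero.mpr (hζ.ne_one hp.one_lt))
    (Nat.succ_pos _) (Nat.one_lt_pow he hp.one_lt) (fun m v E => ?_) b, fun m => ?_⟩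
  · rw [sum_frobFixed_map_pow teichmuller_injective
      (mul_ne_zero (mul_ne_zero he m.succ_ne_zero) (NeZero.ne _))]
    simp only [pow_mul, Nat.cast_pow]
  · rw [← Finset.sum_sub_distrib]
    refine Finset.dvd_sum fun x hx => ?_
    rw [dvd_sub_comm]
    refine dvd_eval_sub_addChar_eval hθ hg hD
      (mul_ne_zero (mul_ne_zero he m.succ_ne_zero) hD₀) (hψ m) fun v => ?_
    exact (mem_frobFixed (mul_ne_zero (mul_ne_zero he m.succ_ne_zero) (NeZero.ne _))).mp
      (Fintype.mem_piFinset.mp hx v)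

end ExponentialSums

section FrobeniusFixed

open MvPolynomial (eval)

variable {σ k : Type*} {p : ℕ} [Fact p.Prime] [Field k] [CharP k p]

theorem map_iterateFrobenius_eq_self_iff {N : ℕ} {g : MvPolynomial σ k} :
    g.map (iterateFrobenius k p N) = g ↔ ∀ t, g.coeff t ^ p ^ N = g.coeff t := by
  simp only [MvPolynomial.ext_iff, MvPolynomial.coeff_map, iterateFrobenius_def]

theorem eval_pow_eq_self {N : ℕ} {g : MvPolynomial σ k}
    (hg : ∀ t, g.coeff t ^ p ^ N = g.coeff t)
    {x : σ → k} (hx : ∀ i, x i ^ p ^ N = x i) : eval x g ^ p ^ N = eval x g := by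
  have comp_eq : iterateFrobenius k p N ∘ x = x := funext hx
  have := MvPolynomial.map_eval (iterateFrobenius k p N) x g
  rwa [map_iterateFrobenius_eq_self_iff.mpr hg, comp_eq] at this

end FrobeniusFixed

section CayleyTrick

open MvPolynomial (eval)

variable {σ J k : Type*} [Fintype J]

/-- The polynomial `∑ j, Y j * f j` in the variables `X` of the `f j` and new variables `Y j`; its
exponential sum over all `Y` detects the common zeros of the `f j`. -/
noncomputable def cayleyPoly [CommSemiring k] (f : J → MvPolynomial σ k) : MvPolynomial (σ ⊕ J) k :=
  ∑ j, .X (.inr j) * .rename .inl (f j)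

theorem eval_cayleyPoly [CommSemiring k] (f : J → MvPolynomial σ k) (z : σ ⊕ J → k) :
    eval z (cayleyPoly f) = ∑ j, z (.inr j) * eval (z ∘ .inl) (f j) := by
  simp [cayleyPoly, MvPolynomial.eval_rename]

theorem sum_addChar_dotProduct [DecidableEq J] [CommRing k] [DecidableEq k] {R : Type*}
    [CommRing R] {A : Finset k} {ψ : AddChar k R}
    (hψ : ∀ w ∈ A, w ≠ 0 → ∑ y ∈ A, ψ (y * w) = 0) {w : J → k} (hw : ∀ j, w j ∈ A) :
    ∑ y ∈ Fintype.piFinset fun _ : J => A, ψ (∑ j, y j * w j) =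
      if ∀ j, w j = 0 then (A.card : R) ^ Fintype.card J else 0 := by
  simp only [addChar_map_sum]
  rw [← Finset.prod_univ_sum (fun _ : J => A) fun j y => ψ (y * w j)]
  split_ifs with h
  · simp [h]
  · obtain ⟨j, hj⟩ := not_forall.mp h
    exact Finset.prod_eq_zero (Finset.mem_univ j) (hψ _ (hw j) hj)

theorem sum_addChar_eval_cayleyPoly [Fintype σ] [DecidableEq σ] [DecidableEq J] [CommRing k]
    [DecidableEq k] {R : Type*} [CommRing R] {A : Finset k} {ψ : AddChar k R}
    (hψ : ∀ w ∈ A, w ≠ 0 → ∑ y ∈ A, ψ (y * w) = 0) {B : σ → Finset k} {f : J → MvPolynomial σ k}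
    (hf : ∀ x ∈ Fintype.piFinset B, ∀ j, eval x (f j) ∈ A) :
    ∑ z ∈ Fintype.piFinset (Sum.elim B fun _ => A), ψ (eval z (cayleyPoly f)) =
      (A.card : R) ^ Fintype.card J *
        ({x ∈ Fintype.piFinset B | ∀ j, eval x (f j) = 0} : Finset _).card := by
  calc ∑ z ∈ Fintype.piFinset (Sum.elim B fun _ => A), ψ (eval z (cayleyPoly f))
    _ = ∑ z ∈ Fintype.piFinset B ×ˢ Fintype.piFinset fun _ : J => A,
          ψ (∑ j, z.2 j * eval z.1 (f j)) :=
        Finset.sum_equiv (Equiv.sumArrowEquivProdArrow σ J k) (fun z => by simp)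
          fun z _ => by rw [eval_cayleyPoly]; rfl
    _ = ∑ x ∈ Fintype.piFinset B,
          if ∀ j, eval x (f j) = 0 then (A.card : R) ^ Fintype.card J else 0 := by
        rw [Finset.sum_product]
        exact Finset.sum_congr rfl fun x hx => sum_addChar_dotProduct hψ (hf x hx)
    _ = _ := by
        rw [← Finset.sum_filter, Finset.sum_const, nsmul_eq_mul, mul_comm]

theorem coeff_cayleyPoly_pow {p : ℕ} [Fact p.Prime] [Field k] [CharP k p] {e : ℕ}
    {f : J → MvPolynomial σ k} (hf : ∀ j t, (f j).coeff t ^ p ^ e = (f j).coeff t)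
    (t : σ ⊕ J →₀ ℕ) : (cayleyPoly f).coeff t ^ p ^ e = (cayleyPoly f).coeff t := by
  revert t
  simp only [← map_iterateFrobenius_eq_self_iff] at hf ⊢
  simp only [cayleyPoly, map_sum, map_mul, MvPolynomial.map_X, MvPolynomial.map_rename, hf]

end CayleyTrick

section ZeroCount

universe u v w

open MvPolynomial (eval)

theorem exists_finset_forall_eval_eq_zero {σ J k : Type*} [CommRing k]
    [IsNoetherianRing k] [Finite σ] (f : J → MvPolynomial σ k) :
    ∃ s : Finset J, ∀ x, (∀ j ∈ s, eval x (f j) = 0) → ∀ j, eval x (f j) = 0 := by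
  classical
  obtain ⟨t, ht, span_eq⟩ := (Submodule.fg_span_iff_fg_span_finset_subset (Set.range f)).mp
    (IsNoetherian.noetherian (Ideal.span (Set.range f)))
  obtain ⟨s, -, rfl⟩ := Finset.subset_set_image_iff.mp (Set.image_univ ▸ ht)
  refine ⟨s, fun x hx j => ?_⟩
  suffices h : Ideal.span (Set.range f) ≤ RingHom.ker (eval x) from
    h (Ideal.subset_span (Set.mem_range_self j))
  refine span_eq.trans_le (Ideal.span_le.mpr ?_)
  simpa [Set.subset_def] using hx

variable {σ : Type u} {J : Type v} {k : Type*}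
variable {p : ℕ} [Fact p.Prime] [Field k] {e m : ℕ} {f : J → MvPolynomial σ k}

/-- The number of common zeros of the `f j` that are fixed by the `m`-th iterate of the Frobenius
vector `(x i) ↦ (x i ^ q ^ d i)`. -/
noncomputable def zeroCount (q : ℕ) (d : σ → ℕ) (f : J → MvPolynomial σ k) (m : ℕ) : ℕ :=
  Nat.card {x : σ → k // (∀ j, eval x (f j) = 0) ∧ ∀ i, x i ^ q ^ (m * d i) = x i}

variable {d : σ → ℕ}

theorem zeroCount_eq_card [Fintype σ] [DecidableEq σ]
    [DecidablePred fun x : σ → k => ∀ j, eval x (f j) = 0] (he : e ≠ 0) (hd : ∀ i, d i ≠ 0)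
    (hm : m ≠ 0) :
    zeroCount (p ^ e) d f m =
      ({x ∈ Fintype.piFinset fun i => frobFixed p k (e * m * d i) |
        ∀ j, eval x (f j) = 0} : Finset _).card := by
  refine Nat.subtype_card _ fun x => ?_
  simp only [Finset.mem_filter, Fintype.mem_piFinset, and_comm, ← pow_mul, ← mul_assoc,
    mem_frobFixed (mul_ne_zero (mul_ne_zero he hm) (hd _))]

variable [CharP k p] [IsAlgClosed k]

theorem zeroCount_le [Fintype σ] (he : e ≠ 0) (hd : ∀ i, d i ≠ 0) (hm : m ≠ 0) :
    zeroCount (p ^ e) d f m ≤ (p ^ (e * ∑ i, d i)) ^ m := by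
  classical
  rw [zeroCount_eq_card he hd hm]
  calc _ ≤ (Fintype.piFinset fun i => frobFixed p k (e * m * d i)).card := Finset.card_filter_le _ _
    _ = ∏ i, p ^ (e * m * d i) := by
      simp only [Fintype.card_piFinset, card_frobFixed (mul_ne_zero (mul_ne_zero he hm) (hd _))]
    _ = (p ^ (e * ∑ i, d i)) ^ m := by
      rw [Finset.prod_pow_eq_pow_sum, ← Finset.mul_sum, ← pow_mul, mul_right_comm]

theorem hasCompactTrace_zeroCount [Finite σ] [Fintype J] {R : Type w} [CommRing R] [IsDomain R]
    [Algebra (WittVector p k) R] [FaithfulSMul (WittVector p k) R] {ζ : R}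
    (hζ : IsPrimitiveRoot ζ p) (hpR : (p : R) ≠ 0) (he : e ≠ 0) {D : ℕ} (hD₀ : D ≠ 0)
    (hD : ∀ i, d i ∣ D) (hf : ∀ j t, (f j).coeff t ^ p ^ e = (f j).coeff t) :
    HasCompactTrace.{max u v} (ζ - 1) fun m =>
      ((p : R) ^ (e * D * Fintype.card J)) ^ (m + 1) * zeroCount (p ^ e) d f (m + 1) := by
  classical
  cases nonempty_fintype σ
  have hd (i : σ) : d i ≠ 0 := ne_zero_of_dvd_ne_zero hD₀ (hD i)
  have exponent_ne (m : ℕ) : e * (m + 1) * D ≠ 0 := mul_ne_zero (mul_ne_zero he m.succ_ne_zero) hD₀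
  choose ψ hψ ψ_orthogonal using fun m => exists_isTraceChar (k := k) hζ (exponent_ne m)
  let d' : σ ⊕ J → ℕ := Sum.elim d fun _ => D
  have eval_mem (m : ℕ) (x : σ → k)
      (hx : x ∈ Fintype.piFinset fun i => frobFixed p k (e * (m + 1) * d i)) (j : J) :
      eval x (f j) ∈ frobFixed p k (e * (m + 1) * D) := by
    refine (mem_frobFixed (exponent_ne m)).mpr (eval_pow_eq_self (fun t => ?_) fun i => ?_)
    · rw [mul_assoc e, pow_pow_mul (hf j t)]
    · obtain ⟨l, rfl⟩ := hD i
      rw [← mul_assoc]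
      exact pow_pow_mul ((mem_frobFixed (mul_ne_zero (mul_ne_zero he m.succ_ne_zero) (hd i))).mp
        (Fintype.mem_piFinset.mp hx i)) l
  convert hasCompactTrace_sum_addChar_eval (d := d') hζ hpR he hD₀
    (fun v => v.rec hD fun _ => dvd_rfl) (coeff_cayleyPoly_pow hf) hψ using 2 with m
  have domain_eq : (fun v => frobFixed p k (e * (m + 1) * d' v)) =
      Sum.elim (fun i => frobFixed p k (e * (m + 1) * d i))
        fun _ => frobFixed p k (e * (m + 1) * D) :=
    funext fun v => by cases v <;> rfl
  rw [domain_eq, sum_addChar_eval_cayleyPoly (ψ_orthogonal m) (eval_mem m),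
    card_frobFixed (exponent_ne m), zeroCount_eq_card he hd m.succ_ne_zero, Nat.cast_pow]
  ring

theorem isRational_zeroCount [Finite σ] [Finite J] (he : e ≠ 0) (hd : ∀ i, d i ≠ 0)
    (hf : ∀ j t, (f j).coeff t ^ p ^ e = (f j).coeff t) :
    IsRational (mk fun m => if m = 0 then 0 else (zeroCount (p ^ e) d f m : ℚ)) := by
  cases nonempty_fintype σ
  cases nonempty_fintype J
  have hp : p.Prime := Fact.out
  have p_not_isUnit : ¬IsUnit (p : WittVector p k) := fun h =>
    not_isUnit_zero (M₀ := k) (by simpa using h.map (WittVector.constantCoeff (p := p)))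
  obtain ⟨R, _, _, _, _, ζ, hζ, hpR, hunit⟩ :=
    exists_isPrimitiveRoot_not_isUnit (WittVector p k) (WittVector.p_nonzero p k) p_not_isUnit
  set c := p ^ (e * (∏ i, d i) * Fintype.card J)
  have c_ne : (c : ℚ) ≠ 0 := Nat.cast_ne_zero.mpr (pow_ne_zero _ hp.ne_zero)
  have shifted_rational : IsRational
      (mk fun m => (((c ^ (m + 1) * zeroCount (p ^ e) d f (m + 1) : ℕ) : ℤ) : ℚ)) := by
    refine HasCompactTrace.isRational (ϖ := ζ - 1) (s := p) (c := c * p ^ (e * ∑ i, d i))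
      hp.one_lt (fun M n h => ?_) (fun m => ?_) ?_
    · refine pow_dvd_of_pow_dvd_intCast hp hpR hunit (dvd_trans ?_ h)
      rw [pow_mul]
      exact pow_dvd_pow_of_dvd (dvd_sub_one_pow hp hζ.pow_eq_one) M
    · rw [Nat.abs_cast, Nat.cast_mul c, mul_pow]
      exact_mod_cast Nat.mul_le_mul_left _ (zeroCount_le he hd m.succ_ne_zero)
    · simpa [c] using hasCompactTrace_zeroCount hζ hpR he
        (Finset.prod_ne_zero_iff.mpr fun i _ => hd i)
        (fun i => Finset.dvd_prod_of_mem d (Finset.mem_univ i)) hf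
  convert shifted_rational.X_mul.rescale (inv_ne_zero c_ne) using 1
  ext (_ | m)
  · simp
  · simp only [coeff_rescale, coeff_succ_X_mul, coeff_mk, if_neg m.succ_ne_zero]
    push_cast
    rw [← mul_assoc, ← mul_pow, inv_mul_cancel₀ c_ne, one_pow, one_mul]

end ZeroCount
end FrobeniusVector

open FrobeniusVector in
theorem frobenius_vector_poincare_series_rational_general {p : ℕ} [Fact p.Prime] {k : Type*}
    [Field k] [CharP k p] [IsAlgClosed k] {σ J : Type*} [Finite σ] {e : ℕ} (he : e ≠ 0)
    {d : σ → ℕ} (hd : ∀ i, d i ≠ 0) {f : J → MvPolynomial σ k}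
    (hf : ∀ j t, (f j).coeff t ^ p ^ e = (f j).coeff t) :
    IsRational (mk fun m => if m = 0 then 0 else (zeroCount (p ^ e) d f m : ℚ)) := by
  obtain ⟨s, hs⟩ := exists_finset_forall_eval_eq_zero f
  have zeroCount_eq (m : ℕ) :
      zeroCount (p ^ e) d f m = zeroCount (p ^ e) d (fun j : s => f j) m :=
    Nat.card_congr <| Equiv.subtypeEquivRight fun x =>
      and_congr_left' ⟨fun h j => h j, fun h => hs x fun j hj => h ⟨j, hj⟩⟩
  simp only [zeroCount_eq]
  exact isRational_zeroCount he hd fun j => hf j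

/-- Wan's rationality theorem for zeta functions attached to Frobenius vectors, in
Poincaré-series form: for positive integers `d₁, …, dₙ` and polynomials `f j` over
`Ω = AlgebraicClosure (ZMod p)` with all coefficients fixed by `c ↦ c^q` (`q = p^e`), the
series whose `m`-th coefficient counts common zeros whose `i`-th coordinate lies in the
subfield with `q^{m·dᵢ}` elements is rational. -/
theorem frobenius_vector_poincare_series_rational (p : ℕ) [Fact p.Prime] (e : ℕ)
    (he : 1 ≤ e) (n r : ℕ) (d : Fin n → ℕ) (hd : ∀ i, 1 ≤ d i)
    (f : Fin r → MvPolynomial (Fin n) (AlgebraicClosure (ZMod p)))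
    (hf : ∀ j c, ((f j).coeff c) ^ (p ^ e) = (f j).coeff c) :
    ∃ a b : Polynomial ℚ, b ≠ 0 ∧
      (b : PowerSeries ℚ) *
        PowerSeries.mk (fun m => if m = 0 then 0 else
          (Nat.card {x : Fin n → AlgebraicClosure (ZMod p) //
            (∀ j, MvPolynomial.eval x (f j) = 0) ∧
            ∀ i, (x i) ^ ((p ^ e) ^ (m * d i)) = x i} : ℚ)) = (a : PowerSeries ℚ) :=
  frobenius_vector_poincare_series_rational_general (Nat.one_le_iff_ne_zero.mp he)
    (fun i => Nat.one_le_iff_ne_zero.mp (hd i)) hf
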